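/- arXiv:1311.4926 — 3 statements merged into one kernel-verified Lean document; each statement's English description precedes it below -/
import Mathlib

section
/- Let f: ℝ → ℝ be a measurable function with period 1 whose distribution function F(x) = μ{t ∈ (0,1) : f(t) ≤ x} satisfies F(x) < 1 for all x, and suppose 1 − F is regularly varying at +∞ with exponent −α for some α > 0 (i.e. 1 − F(x) = x^{−α} ℓ(x) with ℓ slowly varying). Let (n_k) be a strictly increasing sequence of positive integers for which there exist positive numbers (T_k) with μ{x ∈ (0,1): |f(x)| ≥ T_k} ≤ k^{−2} and Σ_{k=1}^∞ ( T_k δ_k^{1/4} + ω₂(f_{T_k}, 8 δ_k^{1/2})^{1/2} ) < ∞. Set M_n(x) = max_{1 ≤ k ≤ n} f(n_k x). Then there exist real sequences (a_n) and (b_n) with b_n > 0 such that, with respect to Lebesgue measure on (0,1), (M_n − a_n)/b_n converges in distribution to the Fréchet law G given by G(x) = exp(−x^{−α}) for x > 0 and G(x) = 0 for x ≤ 0. -/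
open MeasureTheory ProbabilityTheory Filter

/-- `δ_k` from the paper: `δ_1 = 1`, `δ_k = 5 (n_{k-1}/n_k + n_k/n_{k+1})` for `k ≥ 2`. -/
noncomputable def delta (n : ℕ → ℕ) : ℕ → ℝ
  | 0 => 1
  | 1 => 1
  | (k + 2) => 5 * ((n (k + 1) : ℝ) / (n (k + 2) : ℝ) + (n (k + 2) : ℝ) / (n (k + 3) : ℝ))

/-- truncation `f_T = f · 1{|f| ≤ T}`. -/
noncomputable def trunc (f : ℝ → ℝ) (T : ℝ) : ℝ → ℝ := fun x => if |f x| ≤ T then f x else 0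

/-- The `L²` modulus of continuity `ω₂(g, δ)`. -/
noncomputable def omega2 (g : ℝ → ℝ) (δ : ℝ) : ℝ :=
  ⨆ h : Set.Icc (0 : ℝ) δ, Real.sqrt (∫ x in (0:ℝ)..1, (g (x + (h : ℝ)) - g (x - (h : ℝ))) ^ 2)

/-- `L` is slowly varying at `+∞`. -/
def SlowlyVarying (L : ℝ → ℝ) : Prop :=
  ∀ c : ℝ, 0 < c → Tendsto (fun x => L (c * x) / L x) atTop (nhds 1)

/-- `M_N(x) = max_{1 ≤ k ≤ N} f(n_k x)` (junk value `0` for `N = 0`). -/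
noncomputable def Mmax (f : ℝ → ℝ) (n : ℕ → ℕ) (N : ℕ) (x : ℝ) : ℝ :=
  if h : (Finset.Icc 1 N).Nonempty then (Finset.Icc 1 N).sup' h (fun k => f ((n k : ℝ) * x))
  else 0

/-- Lebesgue measure on `(0,1)`. -/
noncomputable abbrev nu : Measure ℝ := volume.restrict (Set.Ioo (0:ℝ) 1)

instance nu_prob : IsProbabilityMeasure nu := ⟨by simp [nu]⟩

lemma nu_real_eq (E : Set ℝ) (hE : MeasurableSet E) :
    nu.real E = ∫ x in (0:ℝ)..1, E.indicator (1 : ℝ → ℝ) x := by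
  rw [intervalIntegral.integral_of_le zero_le_one,
    integral_Ioc_eq_integral_Ioo, integral_indicator_one hE]

lemma ind_ii (E : Set ℝ) (hE : MeasurableSet E) (a b : ℝ) :
    IntervalIntegrable (E.indicator (1 : ℝ → ℝ)) volume a b := by
  apply IntervalIntegrable.mono_fun (g := E.indicator (1 : ℝ → ℝ)) (f := fun _ => (1:ℝ)) (by simp)
  · exact (measurable_const.indicator hE).aestronglyMeasurable
  · filter_upwards with x
    by_cases h : x ∈ E <;> simp [h]

lemma ind_per (E : Set ℝ) (hp : ∀ x, x + 1 ∈ E ↔ x ∈ E) :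
    Function.Periodic (E.indicator (1 : ℝ → ℝ)) 1 := by
  intro x
  by_cases h : x ∈ E <;> simp [Set.indicator, h, hp x]

lemma nu_shift (E : Set ℝ) (hE : MeasurableSet E) (hp : ∀ x, x + 1 ∈ E ↔ x ∈ E) (c : ℝ) :
    nu.real {x | x + c ∈ E} = nu.real E := by
  have hE' : MeasurableSet {x | x + c ∈ E} := (measurable_id.add_const c) hE
  rw [nu_real_eq _ hE, nu_real_eq _ hE']
  have h1 : ∀ x, Set.indicator {x | x + c ∈ E} (1 : ℝ → ℝ) x = E.indicator (1 : ℝ → ℝ) (x + c) := by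
    intro x; simp [Set.indicator]
  simp only [h1]
  rw [intervalIntegral.integral_comp_add_right (fun x => E.indicator (1 : ℝ → ℝ) x) c]
  have := (ind_per E hp).intervalIntegral_add_eq 0 c
  rw [zero_add] at this
  rw [this]; congr 1 <;> ring

lemma nu_dil (E : Set ℝ) (hE : MeasurableSet E) (hp : ∀ x, x + 1 ∈ E ↔ x ∈ E) (n : ℕ) (hn : 0 < n) :
    nu.real {x | (n:ℝ) * x ∈ E} = nu.real E := by
  have hE' : MeasurableSet {x | (n:ℝ) * x ∈ E} := (measurable_id.const_mul (n:ℝ)) hE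
  rw [nu_real_eq _ hE, nu_real_eq _ hE']
  have h1 : ∀ x, Set.indicator {x | (n:ℝ) * x ∈ E} (1 : ℝ → ℝ) x
      = E.indicator (1 : ℝ → ℝ) ((n:ℝ) * x) := by
    intro x; simp [Set.indicator]
  simp only [h1]
  have hn' : (n:ℝ) ≠ 0 := by positivity
  rw [intervalIntegral.integral_comp_mul_left (fun x => E.indicator (1 : ℝ → ℝ) x) hn']
  have := (ind_per E hp).intervalIntegral_add_zsmul_eq n 0 (fun a b => ind_ii E hE _ _)
  simp only [zero_add, zsmul_eq_mul, mul_one, Int.cast_natCast] at this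
  rw [mul_one, mul_zero, this, smul_eq_mul]
  field_simp

lemma equi_int (E : Set ℝ) (hE : MeasurableSet E) (hp : ∀ x, x + 1 ∈ E ↔ x ∈ E) (a b : ℝ) :
    |(∫ x in a..b, E.indicator (1 : ℝ → ℝ) x) - (b - a) * nu.real E| ≤ 2 := by
  set ψ : ℝ → ℝ := E.indicator 1 with hψ
  set e := nu.real E with he
  have he0 : 0 ≤ e := measureReal_nonneg
  have he1 : e ≤ 1 := measureReal_le_one
  have hii : ∀ a b, IntervalIntegrable ψ volume a b := ind_ii E hE
  have hψ0 : ∀ x, 0 ≤ ψ x := fun x => Set.indicator_nonneg (by simp) x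
  let φ : ℝ → ℝ := fun t => (∫ x in (0:ℝ)..t, ψ x) - t * e
  have hφp : Function.Periodic φ 1 := by
    intro t
    simp only [φ]
    have h1 := (ind_per E hp).intervalIntegral_add_eq t 0
    have h2 := intervalIntegral.integral_add_adjacent_intervals (hii 0 t) (hii t (t+1))
    rw [zero_add, ← nu_real_eq E hE] at h1
    rw [← h2]
    change ∫ x in t..t+1, ψ x = e at h1
    rw [h1]; ring
  have hφb : ∀ t, |φ t| ≤ 1 := by
    intro t
    have : φ t = φ (Int.fract t) := by
      have := hφp.sub_zsmul_eq ⌊t⌋ (x := t)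
      rw [← this]; simp
    rw [this]
    set s := Int.fract t
    have hs0 : 0 ≤ s := Int.fract_nonneg t
    have hs1 : s ≤ 1 := (Int.fract_lt_one t).le
    have i0 : 0 ≤ ∫ x in (0:ℝ)..s, ψ x := intervalIntegral.integral_nonneg hs0 (fun x _ => hψ0 x)
    have i1 : 0 ≤ ∫ x in s..1, ψ x := intervalIntegral.integral_nonneg hs1 (fun x _ => hψ0 x)
    have i2 := intervalIntegral.integral_add_adjacent_intervals (hii 0 s) (hii s 1)
    have i3 : ∫ x in (0:ℝ)..1, ψ x = e := (nu_real_eq E hE).symm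
    simp only [φ]
    rw [abs_le]
    constructor <;> nlinarith
  have h2 := intervalIntegral.integral_add_adjacent_intervals (hii 0 a) (hii a b)
  have : (∫ x in a..b, ψ x) - (b - a) * e = φ b - φ a := by
    simp only [φ]; rw [← h2]; ring
  rw [this]
  have := abs_sub (φ b) (φ a)
  linarith [hφb a, hφb b]

lemma cell_sum (p : ℕ) (c : ℤ → ℝ) (hc : ∀ i, |c i| ≤ 1) (g : ℝ → ℝ) (hg : Measurable g)
    (hg1 : ∀ x, |g x| ≤ 1) :
    ∫ t in (0:ℝ)..1, c ⌊(2:ℝ)^p * t⌋ * g t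
      = ∑ i ∈ Finset.range (2^p), c i * ∫ t in ((i:ℕ):ℝ)/2^p..((i+1:ℕ):ℝ)/2^p, g t := by
  have hm : Measurable (fun t : ℝ => c ⌊(2:ℝ)^p * t⌋ * g t) := by
    have : Measurable c := measurable_of_countable c
    fun_prop
  have hint : ∀ a b, IntervalIntegrable (fun t : ℝ => c ⌊(2:ℝ)^p * t⌋ * g t) volume a b := by
    intro a b
    apply IntervalIntegrable.mono_fun (f := fun _ => (1:ℝ)) (by simp) hm.aestronglyMeasurable
    filter_upwards with x
    simp only [Real.norm_eq_abs, abs_mul, abs_one]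
    exact mul_le_one₀ (hc _) (abs_nonneg _) (hg1 x)
  have h := intervalIntegral.sum_integral_adjacent_intervals
    (μ := volume) (f := fun t : ℝ => c ⌊(2:ℝ)^p * t⌋ * g t) (a := fun i : ℕ => (i:ℝ)/2^p) (n := 2^p)
    (fun k _ => hint _ _)
  simp only [Nat.cast_zero, zero_div, Nat.cast_pow, Nat.cast_ofNat] at h
  rw [div_self (by positivity)] at h
  rw [← h]
  apply Finset.sum_congr rfl
  intro i _
  rw [← intervalIntegral.integral_const_mul]
  have hle : (i:ℝ)/2^p ≤ ((i+1:ℕ):ℝ)/2^p := by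
    gcongr; simp
  rw [intervalIntegral.integral_of_le hle, intervalIntegral.integral_of_le hle,
    integral_Ioc_eq_integral_Ioo, integral_Ioc_eq_integral_Ioo]
  apply setIntegral_congr_fun measurableSet_Ioo
  intro t ht
  have h2 : (0:ℝ) < 2^p := by positivity
  have : ⌊(2:ℝ)^p * t⌋ = (i:ℤ) := by
    rw [Int.floor_eq_iff]
    obtain ⟨h3, h4⟩ := ht
    rw [div_lt_iff₀ h2] at h3
    rw [lt_div_iff₀ h2] at h4
    push_cast at *
    constructor <;> linarith
  simp only [this]

lemma equi_cell (E : Set ℝ) (hE : MeasurableSet E) (hp : ∀ x, x + 1 ∈ E ↔ x ∈ E) (n : ℕ) (hn : 0 < n)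
    (p : ℕ) (S : Set ℤ) :
    |nu.real ({t | ⌊(2:ℝ)^p * t⌋ ∈ S} ∩ {t | (n:ℝ) * t ∈ E})
      - nu.real {t | ⌊(2:ℝ)^p * t⌋ ∈ S} * nu.real E| ≤ 2 * 2^p / n := by
  classical
  have hn' : (0:ℝ) < n := by positivity
  let c : ℤ → ℝ := S.indicator 1
  have hc : ∀ i, |c i| ≤ 1 := by
    intro i; by_cases h : i ∈ S <;> simp [c, h]
  have hS : MeasurableSet {t : ℝ | ⌊(2:ℝ)^p * t⌋ ∈ S} := by
    have : Measurable (fun t : ℝ => ⌊(2:ℝ)^p * t⌋) := by fun_prop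
    exact this (Set.to_countable S).measurableSet
  have hE' : MeasurableSet {x | (n:ℝ) * x ∈ E} := (measurable_id.const_mul (n:ℝ)) hE
  set e := nu.real E
  have h1 : nu.real ({t | ⌊(2:ℝ)^p * t⌋ ∈ S} ∩ {t | (n:ℝ) * t ∈ E})
      = ∑ i ∈ Finset.range (2^p), c i * ((∫ x in (n:ℝ) * (i/2^p)..(n:ℝ) * ((i+1:ℕ)/2^p), E.indicator (1 : ℝ → ℝ) x) / n) := by
    rw [nu_real_eq _ (hS.inter hE')]
    have := cell_sum p c hc (fun t => E.indicator 1 ((n:ℝ)*t))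
      ((measurable_const.indicator hE).comp (measurable_id.const_mul (n:ℝ)))
      (by intro x; by_cases h : (n:ℝ) * x ∈ E <;> simp [h])
    convert this using 1
    · congr 1; ext t
      by_cases h1 : ⌊(2:ℝ)^p * t⌋ ∈ S <;> by_cases h2 : (n:ℝ) * t ∈ E <;> simp [c, Set.indicator, h1, h2]
    · apply Finset.sum_congr rfl
      intro i _
      rw [intervalIntegral.integral_comp_mul_left (fun x => E.indicator (1 : ℝ → ℝ) x) hn'.ne']
      simp only [smul_eq_mul]; ring
  have h2 : nu.real {t | ⌊(2:ℝ)^p * t⌋ ∈ S}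
      = ∑ i ∈ Finset.range (2^p), c i * (((i+1:ℕ):ℝ)/2^p - i/2^p) := by
    rw [nu_real_eq _ hS]
    have := cell_sum p c hc (fun t => 1) measurable_const (by simp)
    convert this using 1
    · congr 1; ext t
      by_cases h1 : ⌊(2:ℝ)^p * t⌋ ∈ S <;> simp [c, Set.indicator, h1]
    · simp
  rw [h1, h2, Finset.sum_mul, ← Finset.sum_sub_distrib]
  refine (Finset.abs_sum_le_sum_abs _ _).trans ?_
  have h3 : ∀ i ∈ Finset.range (2^p), |c i * ((∫ x in (n:ℝ) * (i/2^p)..(n:ℝ) * ((i+1:ℕ)/2^p), E.indicator (1 : ℝ → ℝ) x) / n)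
      - c i * (((i+1:ℕ):ℝ)/2^p - i/2^p) * e| ≤ 2 / n := by
    intro i _
    have h4 := equi_int E hE hp ((n:ℝ) * (i/2^p)) ((n:ℝ) * ((i+1:ℕ)/2^p))
    set I := ∫ x in (n:ℝ) * (i/2^p)..(n:ℝ) * ((i+1:ℕ)/2^p), E.indicator (1 : ℝ → ℝ) x
    have : c i * (I / n) - c i * (((i+1:ℕ):ℝ)/2^p - i/2^p) * e
        = c i * ((I - ((n:ℝ) * ((i+1:ℕ)/2^p) - (n:ℝ) * (i/2^p)) * e) / n) := by
      field_simp
    rw [this, abs_mul, abs_div, abs_of_pos hn']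
    calc _ ≤ 1 * (2 / (n:ℝ)) := by
          gcongr
          exact hc i
      _ = _ := one_mul _
  refine (Finset.sum_le_sum h3).trans ?_
  simp
  apply le_of_eq; ring

lemma omega_bound (f : ℝ → ℝ) (hf : Measurable f) (hper : ∀ x, f (x + 1) = f x) (T : ℝ) (hT : 0 < T)
    (η : ℝ) (hη : nu.real {x | T ≤ |f x|} ≤ η) (d h : ℝ) (h0 : 0 ≤ h) (hd : h ≤ d) :
    nu.real {x | 1 < |f (x + h) - f (x - h)|} ≤ 2 * η + (omega2 (trunc f T) d)^2 := by
  set g := trunc f T with hg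
  have hgm : Measurable g := by
    apply Measurable.ite _ hf measurable_const
    exact measurableSet_le (by fun_prop) measurable_const
  have hgb : ∀ x, |g x| ≤ T := by
    intro x
    simp only [hg, trunc]
    split_ifs with hh
    · exact hh
    · simpa using hT.le
  have hsqb : ∀ s x, (g (x + s) - g (x - s))^2 ≤ (2*T)^2 := by
    intro s x
    apply sq_le_sq'
    · linarith [abs_le.1 (hgb (x+s)), abs_le.1 (hgb (x-s))]
    · linarith [abs_le.1 (hgb (x+s)), abs_le.1 (hgb (x-s))]
  have hint : ∀ s, Integrable (fun x => (g (x + s) - g (x - s))^2) nu := by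
    intro s
    apply Integrable.of_bound (C := (2*T)^2)
    · filter_upwards with x
      rw [Real.norm_eq_abs, abs_of_nonneg (sq_nonneg _)]
      exact hsqb s x
    · have : Measurable (fun x => (g (x + s) - g (x - s))^2) := by fun_prop
      exact this.aestronglyMeasurable
  have hii : ∀ s, ∫ x in (0:ℝ)..1, (g (x + s) - g (x - s))^2 = ∫ x, (g (x + s) - g (x - s))^2 ∂nu := by
    intro s
    rw [intervalIntegral.integral_of_le zero_le_one, integral_Ioc_eq_integral_Ioo]
  have hbdd : BddAbove (Set.range (fun s : Set.Icc (0 : ℝ) d =>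
      Real.sqrt (∫ x in (0:ℝ)..1, (g (x + (s : ℝ)) - g (x - (s : ℝ))) ^ 2))) := by
    refine ⟨Real.sqrt ((2*T)^2), ?_⟩
    rintro _ ⟨s, rfl⟩
    apply Real.sqrt_le_sqrt
    rw [hii]
    have := integral_mono (hint s) (integrable_const ((2*T)^2)) (hsqb s)
    simpa using this
  have h1 : Real.sqrt (∫ x, (g (x + h) - g (x - h))^2 ∂nu) ≤ omega2 g d := by
    have := le_ciSup hbdd ⟨h, h0, hd⟩
    rw [← hii]
    exact this
  have h2 : ∫ x, (g (x + h) - g (x - h))^2 ∂nu ≤ (omega2 g d)^2 := by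
    rw [← Real.sqrt_le_left]
    · exact h1
    · exact (Real.sqrt_nonneg _).trans h1
  have h3 : nu.real {x | 1 ≤ (g (x + h) - g (x - h))^2} ≤ (omega2 g d)^2 := by
    have := mul_meas_ge_le_integral_of_nonneg (μ := nu)
      (f := fun x => (g (x + h) - g (x - h))^2) (by filter_upwards with x; positivity) (hint h) 1
    rw [one_mul] at this
    exact this.trans h2
  have hB : MeasurableSet {x | T ≤ |f x|} := measurableSet_le measurable_const (by fun_prop)
  have hBp : ∀ x, x + 1 ∈ {x | T ≤ |f x|} ↔ x ∈ {x | T ≤ |f x|} := by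
    intro x; simp [hper]
  have h4 := nu_shift _ hB hBp h
  have h5 := nu_shift _ hB hBp (-h)
  have hsub : {x | 1 < |f (x + h) - f (x - h)|} ⊆
      ({x | x + h ∈ {x | T ≤ |f x|}} ∪ {x | x + (-h) ∈ {x | T ≤ |f x|}}) ∪
        {x | 1 ≤ (g (x + h) - g (x - h))^2} := by
    intro x hx
    by_cases ha : T ≤ |f (x + h)|
    · left; left; exact ha
    by_cases hb : T ≤ |f (x - h)|
    · left; right; simpa [sub_eq_add_neg] using hb
    right
    push Not at ha hb
    simp only [hg, trunc, Set.mem_ofPred_eq, ha.le, hb.le, if_true] at hx ⊢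
    rw [one_le_sq_iff_one_le_abs]; exact hx.le
  have h6 := measureReal_mono (μ := nu) hsub
  have h7 := measureReal_union_le (μ := nu) ({x | x + h ∈ {x | T ≤ |f x|}} ∪ {x | x + (-h) ∈ {x | T ≤ |f x|}})
    {x | 1 ≤ (g (x + h) - g (x - h))^2}
  have h8 := measureReal_union_le (μ := nu) {x | x + h ∈ {x | T ≤ |f x|}} {x | x + (-h) ∈ {x | T ≤ |f x|}}
  linarith

/-- shift version: any `w` with `|w| ≤ 2 d`. -/
lemma shift_bound (f : ℝ → ℝ) (hf : Measurable f) (hper : ∀ x, f (x + 1) = f x) (B d : ℝ)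
    (H : ∀ h, 0 ≤ h → h ≤ d → nu.real {x | 1 < |f (x + h) - f (x - h)|} ≤ B)
    (w : ℝ) (hw : |w| ≤ 2 * d) :
    nu.real {x | 1 < |f x - f (x + w)|} ≤ B := by
  have hm : MeasurableSet {x | 1 < |f x - f (x + w)|} :=
    measurableSet_lt measurable_const (by fun_prop)
  have hp : ∀ x, x + 1 ∈ {x | 1 < |f x - f (x + w)|} ↔ x ∈ {x | 1 < |f x - f (x + w)|} := by
    intro x
    have : f (x + 1 + w) = f (x + w) := by rw [← hper (x + w)]; congr 1; ring
    simp [hper, this]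
  rw [← nu_shift _ hm hp (-(w/2))]
  refine le_trans (le_of_eq ?_) (H (|w|/2) (by positivity) (by linarith))
  congr 1; ext x
  simp only [Set.mem_ofPred_eq]
  rcases le_total 0 w with h | h
  · rw [abs_of_nonneg h, abs_sub_comm]
    have e1 : x + -(w/2) + w = x + w/2 := by ring
    have e2 : x + -(w/2) = x - w/2 := by ring
    rw [e1, e2]
  · rw [abs_of_nonpos h]
    have e1 : x + -(w/2) + w = x - -w/2 := by ring
    have e2 : x + -(w/2) = x + -w/2 := by ring
    rw [e1, e2]

lemma grid_choice (f : ℝ → ℝ) (hf : Measurable f) (hper : ∀ x, f (x + 1) = f x) (B : ℝ) (hB : 0 ≤ B)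
    (n p : ℕ) (hn : 0 < n)
    (H : ∀ w : ℝ, |w| ≤ (n:ℝ) / 2^p → nu.real {x | 1 < |f x - f (x + w)|} ≤ B) :
    ∃ φ : ℤ → ℝ, nu.real {t | 1 < |f ((n:ℝ) * t) - φ ⌊(2:ℝ)^p * t⌋|} ≤ 2 * B := by
  let G : ℝ → ℝ → ENNReal := fun θ t =>
    Set.indicator {q : ℝ × ℝ | 1 < |f ((n:ℝ) * q.2) - f ((n:ℝ) * ((⌊(2:ℝ)^p * q.2⌋ + q.1) / 2^p))|} 1 (θ, t)
  have hGset : MeasurableSet {q : ℝ × ℝ | 1 < |f ((n:ℝ) * q.2) - f ((n:ℝ) * ((⌊(2:ℝ)^p * q.2⌋ + q.1) / 2^p))|} := by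
    apply measurableSet_lt measurable_const
    have : Measurable (fun q : ℝ × ℝ => ((⌊(2:ℝ)^p * q.2⌋ : ℤ) : ℝ)) :=
      (measurable_of_countable (fun i : ℤ => (i:ℝ))).comp (by fun_prop)
    fun_prop
  have hGm : Measurable (Function.uncurry G) := measurable_const.indicator hGset
  let K : ℝ → ℝ → ENNReal := fun w t =>
    Set.indicator {q : ℝ × ℝ | 1 < |f ((n:ℝ) * q.2) - f ((n:ℝ) * q.2 + (n:ℝ) * (q.1 / 2^p))|} 1 (w, t)
  have hKset : MeasurableSet {q : ℝ × ℝ | 1 < |f ((n:ℝ) * q.2) - f ((n:ℝ) * q.2 + (n:ℝ) * (q.1 / 2^p))|} := by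
    apply measurableSet_lt measurable_const
    fun_prop
  have hKm : Measurable (Function.uncurry K) := measurable_const.indicator hKset
  have hK : ∀ w ∈ Set.Icc (-1:ℝ) 1, ∫⁻ t, K w t ∂nu ≤ ENNReal.ofReal B := by
    intro w hw
    have hm : MeasurableSet {x | 1 < |f x - f (x + (n:ℝ) * (w / 2^p))|} :=
      measurableSet_lt measurable_const (by fun_prop)
    have hp : ∀ x, x + 1 ∈ {x | 1 < |f x - f (x + (n:ℝ) * (w / 2^p))|} ↔ x ∈ {x | 1 < |f x - f (x + (n:ℝ) * (w / 2^p))|} := by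
      intro x
      have : f (x + 1 + (n:ℝ) * (w / 2^p)) = f (x + (n:ℝ) * (w / 2^p)) := by
        rw [← hper (x + (n:ℝ) * (w / 2^p))]; congr 1; ring
      simp [hper, this]
    have h1 := H ((n:ℝ) * (w / 2^p)) (by
      rw [abs_mul, abs_div, abs_of_nonneg (by positivity : (0:ℝ) ≤ n), abs_of_pos (by positivity : (0:ℝ) < 2^p)]
      rw [mul_div_assoc']
      gcongr
      have : |w| ≤ 1 := abs_le.2 hw
      have h0 : (0:ℝ) ≤ n := by positivity
      nlinarith)
    rw [← nu_dil _ hm hp n hn] at h1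
    have h2 : ∫⁻ t, K w t ∂nu = nu {x | (n:ℝ) * x ∈ {x | 1 < |f x - f (x + (n:ℝ) * (w / 2^p))|}} := by
      have hm' : MeasurableSet {x | (n:ℝ) * x ∈ {x | 1 < |f x - f (x + (n:ℝ) * (w / 2^p))|}} :=
        (measurable_id.const_mul (n:ℝ)) hm
      rw [← lintegral_indicator_one hm']
      rfl
    rw [h2]
    rw [← ofReal_measureReal]
    exact ENNReal.ofReal_le_ofReal h1
  have hswap : ∫⁻ θ, (∫⁻ t, G θ t ∂nu) ∂nu ≤ 2 * ENNReal.ofReal B := by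
    rw [lintegral_lintegral_swap hGm.aemeasurable]
    have hin : ∀ t, ∫⁻ θ, G θ t ∂nu ≤ ∫⁻ w in Set.Icc (-1:ℝ) 1, K w t := by
      intro t
      have hGK : ∀ θ, G θ t = K (θ + (⌊(2:ℝ)^p * t⌋ - 2^p * t)) t := by
        intro θ
        simp only [G, K, Set.indicator, Set.mem_ofPred_eq]
        have : (n:ℝ) * t + (n:ℝ) * ((θ + (⌊(2:ℝ)^p * t⌋ - 2^p * t)) / 2^p) = (n:ℝ) * ((⌊(2:ℝ)^p * t⌋ + θ) / 2^p) := by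
          field_simp; ring
        simp only [this, Pi.one_apply]
      rw [← lintegral_indicator measurableSet_Icc]
      rw [← lintegral_add_right_eq_self (μ := volume) _ ((⌊(2:ℝ)^p * t⌋:ℝ) - 2^p * t)]
      rw [← lintegral_indicator measurableSet_Ioo]
      apply lintegral_mono
      intro θ
      simp only [Set.indicator_apply]
      split_ifs with h1 h2
      · rw [hGK]
      · exfalso
        apply h2
        have := Int.floor_le ((2:ℝ)^p * t)
        have := Int.lt_floor_add_one ((2:ℝ)^p * t)
        obtain ⟨h3, h4⟩ := h1
        constructor <;> linarith
      · exact zero_le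
      · exact le_rfl
    refine (lintegral_mono hin).trans ?_
    rw [lintegral_lintegral_swap]
    · refine (setLIntegral_mono' measurableSet_Icc hK).trans ?_
      simp only [lintegral_const, Measure.restrict_apply MeasurableSet.univ, Set.univ_inter, Real.volume_Icc]
      rw [mul_comm]
      norm_num
    · exact (hKm.comp measurable_swap).aemeasurable
  obtain ⟨θ, hθ⟩ := exists_le_lintegral (μ := nu) (f := fun θ => ∫⁻ t, G θ t ∂nu)
    (Measurable.lintegral_prod_right hGm).aemeasurable
  refine ⟨fun i => f ((n:ℝ) * ((i + θ) / 2^p)), ?_⟩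
  have h2 : ∫⁻ t, G θ t ∂nu = nu {t | 1 < |f ((n:ℝ) * t) - f ((n:ℝ) * ((⌊(2:ℝ)^p * t⌋ + θ) / 2^p))|} := by
    have : MeasurableSet {t | 1 < |f ((n:ℝ) * t) - f ((n:ℝ) * ((⌊(2:ℝ)^p * t⌋ + θ) / 2^p))|} :=
      hGset.preimage (measurable_prodMk_left (x := θ))
    rw [← lintegral_indicator_one this]
    rfl
  rw [measureReal_def, ← h2]
  apply ENNReal.toReal_le_of_le_ofReal (by positivity)
  rw [ENNReal.ofReal_mul (by norm_num)]
  simpa using hθ.trans hswap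

lemma adapted_mono (p q : ℕ) (h : p ≤ q) (t : ℝ) :
    ⌊(2:ℝ)^p * t⌋ = ⌊(2:ℝ)^q * t⌋ / ((2^(q-p) : ℕ) : ℤ) := by
  rw [← Int.floor_div_natCast]
  congr 1
  obtain ⟨r, rfl⟩ := Nat.exists_eq_add_of_le h
  have : p + r - p = r := by omega
  rw [this, pow_add]
  push_cast
  field_simp

lemma rec_bound (f : ℝ → ℝ) (hf : Measurable f) (hper : ∀ x, f (x + 1) = f x) (n p : ℕ → ℕ) (K : ℕ)
    (hn : ∀ k, K ≤ k → 0 < n (k+1)) (hp : ∀ k, K ≤ k → p k ≤ p (k+1)) (φ : ℕ → ℤ → ℝ) (β c : ℕ → ℝ)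
    (hβ : ∀ k, K ≤ k → nu.real {t | 1 < |f ((n (k+1):ℝ) * t) - φ (k+1) ⌊(2:ℝ)^(p (k+1)) * t⌋|} ≤ β (k+1))
    (hc : ∀ k, K ≤ k → 2 * 2^(p k) / (n (k+1) : ℝ) ≤ c (k+1)) (u : ℝ) (j : ℕ) :
    (∃ S : Set ℤ, {t : ℝ | ∀ k, K < k → k ≤ K + j → φ k ⌊(2:ℝ)^(p k) * t⌋ ≤ u}
        = {t : ℝ | ⌊(2:ℝ)^(p (K+j)) * t⌋ ∈ S}) ∧
    nu.real {t | f t ≤ u - 1} ^ j - ∑ i ∈ Finset.range j, (β (K+i+1) + c (K+i+1))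
      ≤ nu.real {t : ℝ | ∀ k, K < k → k ≤ K + j → φ k ⌊(2:ℝ)^(p k) * t⌋ ≤ u} ∧
    nu.real {t : ℝ | ∀ k, K < k → k ≤ K + j → φ k ⌊(2:ℝ)^(p k) * t⌋ ≤ u} ≤
    nu.real {t | f t ≤ u + 1} ^ j + ∑ i ∈ Finset.range j, (β (K+i+1) + c (K+i+1)) := by
  induction j with
  | zero =>
    have : {t : ℝ | ∀ k, K < k → k ≤ K + 0 → φ k ⌊(2:ℝ)^(p k) * t⌋ ≤ u} = Set.univ := by
      ext t; simp only [Set.mem_ofPred_eq, Set.mem_univ, iff_true]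
      intro k h1 h2; omega
    rw [this]
    refine ⟨⟨Set.univ, by simp⟩, by simp, by simp⟩
  | succ j ih =>
    obtain ⟨⟨S, hS⟩, ih1, ih2⟩ := ih
    set C := {t : ℝ | ∀ k, K < k → k ≤ K + j → φ k ⌊(2:ℝ)^(p k) * t⌋ ≤ u} with hC
    have hsucc : {t : ℝ | ∀ k, K < k → k ≤ K + (j+1) → φ k ⌊(2:ℝ)^(p k) * t⌋ ≤ u}
        = C ∩ {t | φ (K+j+1) ⌊(2:ℝ)^(p (K+j+1)) * t⌋ ≤ u} := by
      ext t
      simp only [hC, Set.mem_inter_iff, Set.mem_ofPred_eq]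
      constructor
      · intro h
        exact ⟨fun k h1 h2 => h k h1 (by omega), h _ (by omega) (by omega)⟩
      · rintro ⟨h1, h2⟩ k h3 h4
        rcases Nat.lt_or_ge (K + j) k with h5 | h5
        · obtain rfl : k = K + j + 1 := by omega
          exact h2
        · exact h1 k h3 h5
    rw [hsucc]
    have hpj := hp (K+j) (by omega)
    have hnj := hn (K+j) (by omega)
    have hβj := hβ (K+j) (by omega)
    have hcj := hc (K+j) (by omega)
    set D := {t | φ (K+j+1) ⌊(2:ℝ)^(p (K+j+1)) * t⌋ ≤ u} with hD
    set Bad := {t | 1 < |f ((n (K+j+1):ℝ) * t) - φ (K+j+1) ⌊(2:ℝ)^(p (K+j+1)) * t⌋|} with hBad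
    have hEm : ∀ v, MeasurableSet {t | f t ≤ v} := fun v => measurableSet_le hf measurable_const
    have hEp : ∀ v x, x + 1 ∈ {t | f t ≤ v} ↔ x ∈ {t | f t ≤ v} := by
      intro v x; simp [hper]
    have hq : ∀ v, |nu.real (C ∩ {t | (n (K+j+1):ℝ) * t ∈ {t | f t ≤ v}}) - nu.real C * nu.real {t | f t ≤ v}| ≤ c (K+j+1) := by
      intro v
      rw [hS]
      exact (equi_cell _ (hEm v) (hEp v) _ hnj (p (K+j)) S).trans hcj
    have hs1 : C ∩ D ⊆ (C ∩ {t | (n (K+j+1):ℝ) * t ∈ {t | f t ≤ u + 1}}) ∪ Bad := by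
      rintro t ⟨h1, h2⟩
      by_cases hb : t ∈ Bad
      · right; exact hb
      · left
        refine ⟨h1, ?_⟩
        simp only [hBad, hD, Set.mem_ofPred_eq, not_lt, abs_le] at hb h2 ⊢
        linarith
    have hs2 : C ∩ {t | (n (K+j+1):ℝ) * t ∈ {t | f t ≤ u - 1}} ⊆ (C ∩ D) ∪ Bad := by
      rintro t ⟨h1, h2⟩
      by_cases hb : t ∈ Bad
      · right; exact hb
      · left
        refine ⟨h1, ?_⟩
        simp only [hBad, hD, Set.mem_ofPred_eq, not_lt, abs_le] at hb h2 ⊢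
        linarith
    have m1 := (measureReal_mono (μ := nu) hs1).trans (measureReal_union_le _ _)
    have m2 := (measureReal_mono (μ := nu) hs2).trans (measureReal_union_le _ _)
    have q1 := abs_le.1 (hq (u+1))
    have q2 := abs_le.1 (hq (u-1))
    have hG1 : nu.real {t | f t ≤ u + 1} ≤ 1 := measureReal_le_one
    have hG1' : 0 ≤ nu.real {t | f t ≤ u + 1} := measureReal_nonneg
    have hG2 : nu.real {t | f t ≤ u - 1} ≤ 1 := measureReal_le_one
    have hG2' : 0 ≤ nu.real {t | f t ≤ u - 1} := measureReal_nonneg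
    have hs0 : 0 ≤ ∑ i ∈ Finset.range j, (β (K+i+1) + c (K+i+1)) := by
      apply Finset.sum_nonneg
      intro i _
      have h1 := (measureReal_nonneg).trans (hβ (K+i) (by omega))
      have h2 := (by positivity : (0:ℝ) ≤ 2 * 2^(p (K+i)) / (n (K+i+1) : ℝ)).trans (hc (K+i) (by omega))
      linarith
    refine ⟨?_, ?_, ?_⟩
    · refine ⟨{i | i / ((2^(p (K+j+1)-p (K+j)) : ℕ) : ℤ) ∈ S ∧ φ (K+j+1) i ≤ u}, ?_⟩
      rw [hS]
      ext t
      simp only [hD, Set.mem_inter_iff, Set.mem_ofPred_eq]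
      rw [adapted_mono _ _ hpj t]
      rfl
    · rw [Finset.sum_range_succ, pow_succ]
      nlinarith
    · rw [Finset.sum_range_succ, pow_succ]
      nlinarith

lemma max_bound (f : ℝ → ℝ) (hf : Measurable f) (hper : ∀ x, f (x + 1) = f x) (n p : ℕ → ℕ) (K : ℕ)
    (hn : ∀ k, K ≤ k → 0 < n (k+1)) (hp : ∀ k, K ≤ k → p k ≤ p (k+1)) (φ : ℕ → ℤ → ℝ) (β c : ℕ → ℝ)
    (hβ : ∀ k, K ≤ k → nu.real {t | 1 < |f ((n (k+1):ℝ) * t) - φ (k+1) ⌊(2:ℝ)^(p (k+1)) * t⌋|} ≤ β (k+1))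
    (hc : ∀ k, K ≤ k → 2 * 2^(p k) / (n (k+1) : ℝ) ≤ c (k+1)) (u : ℝ) (j : ℕ) :
    nu.real {t | f t ≤ u - 2} ^ j - ∑ i ∈ Finset.range j, (2 * β (K+i+1) + c (K+i+1))
      ≤ nu.real {t : ℝ | ∀ k, K < k → k ≤ K + j → f ((n k:ℝ) * t) ≤ u} ∧
    nu.real {t : ℝ | ∀ k, K < k → k ≤ K + j → f ((n k:ℝ) * t) ≤ u} ≤
    nu.real {t | f t ≤ u + 2} ^ j + ∑ i ∈ Finset.range j, (2 * β (K+i+1) + c (K+i+1)) := by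
  obtain ⟨-, a1, -⟩ := rec_bound f hf hper n p K hn hp φ β c hβ hc (u-1) j
  obtain ⟨-, -, a2⟩ := rec_bound f hf hper n p K hn hp φ β c hβ hc (u+1) j
  have e1 : u - 1 - 1 = u - 2 := by ring
  have e2 : u + 1 + 1 = u + 2 := by ring
  rw [e1] at a1
  rw [e2] at a2
  set Bad : Set ℝ := ⋃ i ∈ Finset.range j, {t | 1 < |f ((n (K+i+1):ℝ) * t) - φ (K+i+1) ⌊(2:ℝ)^(p (K+i+1)) * t⌋|} with hBad
  have hb : nu.real Bad ≤ ∑ i ∈ Finset.range j, β (K+i+1) := by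
    refine (measureReal_biUnion_finset_le _ _).trans ?_
    exact Finset.sum_le_sum (fun i _ => hβ (K+i) (by omega))
  have hnb : ∀ t, t ∉ Bad → ∀ k, K < k → k ≤ K + j → |f ((n k:ℝ) * t) - φ k ⌊(2:ℝ)^(p k) * t⌋| ≤ 1 := by
    intro t ht k h1 h2
    by_contra hcon
    push Not at hcon
    apply ht
    simp only [hBad, Set.mem_iUnion]
    obtain ⟨i, rfl⟩ := Nat.exists_eq_add_of_lt h1
    exact ⟨i, by simp; omega, hcon⟩
  have hs1 : {t : ℝ | ∀ k, K < k → k ≤ K + j → f ((n k:ℝ) * t) ≤ u} ⊆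
      {t : ℝ | ∀ k, K < k → k ≤ K + j → φ k ⌊(2:ℝ)^(p k) * t⌋ ≤ u + 1} ∪ Bad := by
    intro t ht
    by_cases hb : t ∈ Bad
    · right; exact hb
    · left
      intro k h1 h2
      have := abs_le.1 (hnb t hb k h1 h2)
      have := ht k h1 h2
      linarith
  have hs2 : {t : ℝ | ∀ k, K < k → k ≤ K + j → φ k ⌊(2:ℝ)^(p k) * t⌋ ≤ u - 1} ⊆
      {t : ℝ | ∀ k, K < k → k ≤ K + j → f ((n k:ℝ) * t) ≤ u} ∪ Bad := by
    intro t ht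
    by_cases hb : t ∈ Bad
    · right; exact hb
    · left
      intro k h1 h2
      have := abs_le.1 (hnb t hb k h1 h2)
      have := ht k h1 h2
      linarith
  have m1 := (measureReal_mono (μ := nu) hs1).trans (measureReal_union_le _ _)
  have m2 := (measureReal_mono (μ := nu) hs2).trans (measureReal_union_le _ _)
  have hsum : ∑ i ∈ Finset.range j, (2 * β (K+i+1) + c (K+i+1))
    = ∑ i ∈ Finset.range j, (β (K+i+1) + c (K+i+1)) + ∑ i ∈ Finset.range j, β (K+i+1) := by
    rw [← Finset.sum_add_distrib]
    apply Finset.sum_congr rfl; intros; ring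
  rw [hsum]
  constructor <;> linarith

lemma tail_norm (α : ℝ) (hα : 0 < α) (H : ℝ → ℝ) (hanti : Antitone H) (hpos : ∀ x, 0 < H x)
    (hlim : Tendsto H atTop (nhds 0)) (hreg : SlowlyVarying (fun x => H x * x ^ α)) :
    ∃ b : ℕ → ℝ, (∀ N, 1 ≤ b N) ∧ Tendsto b atTop atTop ∧
      ∀ y, 0 < y → Tendsto (fun N : ℕ => (N:ℝ) * H (b N * y)) atTop (nhds (y ^ (-α))) := by
  have hratio : ∀ y, 0 < y → Tendsto (fun x => H (x * y) / H x) atTop (nhds (y ^ (-α))) := by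
    intro y hy
    have h1 := (hreg y hy).mul_const (y ^ (-α))
    rw [one_mul] at h1
    refine h1.congr' ?_
    filter_upwards [eventually_gt_atTop 0] with x hx
    have := hpos x
    have hxa : 0 < x ^ α := Real.rpow_pos_of_pos hx _
    have hya : 0 < y ^ α := Real.rpow_pos_of_pos hy _
    rw [Real.mul_rpow hy.le hx.le, Real.rpow_neg hy.le, mul_comm y x]
    field_simp
  have hex : ∀ N : ℕ, ∃ b : ℝ, 1 ≤ b ∧ N * H b ≤ 1 ∧ ∀ y, 1 ≤ y → y * (1 + 1/((N:ℝ)+1)) ≤ b → 1 < N * H y := by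
    intro N
    let S : Set ℝ := {y | 1 ≤ y ∧ N * H y ≤ 1}
    have hne : S.Nonempty := by
      have h1 : Tendsto (fun x => (N:ℝ) * H x) atTop (nhds 0) := by
        simpa using hlim.const_mul (N:ℝ)
      have h2 := (h1.eventually (gt_mem_nhds zero_lt_one)).and (eventually_ge_atTop 1)
      obtain ⟨y, hy1, hy2⟩ := h2.exists
      exact ⟨y, hy2, hy1.le⟩
    have hbdd : BddBelow S := ⟨1, fun y hy => hy.1⟩
    have hs1 : 1 ≤ sInf S := le_csInf hne (fun y hy => hy.1)
    have hN : (0:ℝ) < 1/((N:ℝ)+1) := by positivity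
    obtain ⟨b, hb, hb2⟩ := exists_lt_of_csInf_lt hne (show sInf S < sInf S * (1 + 1/((N:ℝ)+1)) by nlinarith)
    refine ⟨b, hb.1, hb.2, ?_⟩
    intro y hy hyb
    by_contra hcon
    push Not at hcon
    have h3 : sInf S ≤ y := csInf_le hbdd ⟨hy, hcon⟩
    nlinarith
  choose b hb1 hb2 hb3 using hex
  have hbt : Tendsto b atTop atTop := by
    rw [tendsto_atTop]
    intro M
    filter_upwards [(tendsto_natCast_atTop_atTop (R := ℝ)).eventually_gt_atTop (1 / H M)] with N hN
    by_contra hcon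
    push Not at hcon
    have h1 := hanti hcon.le
    have h2 := hpos M
    rw [div_lt_iff₀ h2] at hN
    have h3 := hb2 N
    have : (0:ℝ) ≤ N := by positivity
    nlinarith
  refine ⟨b, hb1, hbt, ?_⟩
  intro y hy
  have hr := (hratio y hy).comp hbt
  rw [tendsto_order]
  constructor
  · intro a ha
    -- choose c
    have hcont : Tendsto (fun c : ℝ => y ^ (-α) * c ^ α) (nhdsWithin 1 (Set.Iio 1)) (nhds (y ^ (-α))) := by
      have : ContinuousAt (fun c : ℝ => y ^ (-α) * c ^ α) 1 :=
        continuousAt_const.mul (Real.continuousAt_rpow_const _ _ (Or.inl one_ne_zero))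
      have h := this.tendsto
      simp only [Real.one_rpow, mul_one] at h
      exact h.mono_left nhdsWithin_le_nhds
    have hpos' : ∀ᶠ c : ℝ in nhdsWithin 1 (Set.Iio 1), c ∈ Set.Ioo (0:ℝ) 1 :=
      Ioo_mem_nhdsLT zero_lt_one
    obtain ⟨c, hca, hc0, hc1⟩ := ((hcont.eventually (lt_mem_nhds ha)).and hpos').exists
    have hrc := (hratio c hc0).comp hbt
    have hquo := hr.div hrc (Real.rpow_pos_of_pos hc0 _).ne'
    have hval : y ^ (-α) / c ^ (-α) = y ^ (-α) * c ^ α := by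
      rw [Real.rpow_neg hc0.le, div_inv_eq_mul]
    rw [hval] at hquo
    have hN1 : Tendsto (fun N : ℕ => c * (1 + 1/((N:ℝ)+1))) atTop (nhds (c * (1 + 0))) :=
      (tendsto_one_div_add_atTop_nhds_zero_nat.const_add 1).const_mul c
    have hN2 := hN1.eventually (gt_mem_nhds (show c * (1+0) < 1 by linarith))
    have hN3 := (hbt.atTop_mul_const hc0).eventually_ge_atTop 1
    filter_upwards [hquo.eventually (lt_mem_nhds hca), hN2, hN3] with N h1 h2 h3
    have h4 := hb3 N (b N * c) h3 (by nlinarith [hb1 N])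
    have p1 := hpos (b N); have p2 := hpos (b N * c); have p3 := hpos (b N * y)
    refine h1.trans_le ?_
    simp only [Pi.div_apply, Function.comp]
    rw [div_div_div_cancel_right₀ p1.ne', div_le_iff₀ p2]
    nlinarith
  · intro a ha
    filter_upwards [hr.eventually (gt_mem_nhds ha)] with N h1
    refine lt_of_le_of_lt ?_ h1
    simp only [Function.comp]
    have p1 := hpos (b N); have p3 := hpos (b N * y)
    rw [le_div_iff₀ p1]
    nlinarith [hb2 N]

lemma delta_eq (n : ℕ → ℕ) (k : ℕ) (hk : 1 ≤ k) :
    delta n (k+1) = 5 * ((n k : ℝ) / (n (k+1) : ℝ) + (n (k+1) : ℝ) / (n (k+2) : ℝ)) := by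
  obtain ⟨j, rfl⟩ : ∃ j, k = j + 1 := ⟨k - 1, by omega⟩
  rfl

lemma delta_nonneg (n : ℕ → ℕ) (k : ℕ) : 0 ≤ delta n k := by
  match k with
  | 0 => simp [delta]
  | 1 => simp [delta]
  | (k+2) => simp only [delta]; positivity

lemma p_bounds (n : ℕ → ℕ) (hpos : ∀ k, 1 ≤ k → 0 < n k) (k : ℕ) (hk : 1 ≤ k) :
    (n (k+1) : ℝ) / 2 ^ (Nat.log 4 (n (k+1) * n (k+2))) ≤ 16 * Real.sqrt (delta n (k+1)) ∧
    2 * 2 ^ (Nat.log 4 (n k * n (k+1))) / (n (k+1) : ℝ) ≤ 2 * Real.sqrt (delta n (k+1)) := by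
  have a0 : (0:ℝ) < n k := by exact_mod_cast hpos k hk
  have a1 : (0:ℝ) < n (k+1) := by exact_mod_cast hpos (k+1) (by omega)
  have a2 : (0:ℝ) < n (k+2) := by exact_mod_cast hpos (k+2) (by omega)
  have hd := delta_eq n k hk
  have q1 : 0 < (n k : ℝ) / (n (k+1) : ℝ) := by positivity
  have q2 : 0 < (n (k+1) : ℝ) / (n (k+2) : ℝ) := by positivity
  have h4 : ∀ m : ℕ, ((4:ℝ)^m) = (2^m)^2 := by
    intro m; rw [← pow_mul, mul_comm, pow_mul]; norm_num
  constructor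
  · have h := Nat.lt_pow_succ_log_self (b := 4) (by norm_num) (n (k+1) * n (k+2))
    have h' : (n (k+1) : ℝ) * n (k+2) < 4 ^ (Nat.log 4 (n (k+1) * n (k+2))) * 4 := by
      rw [← pow_succ]
      exact_mod_cast h
    rw [h4] at h'
    set P : ℝ := 2 ^ (Nat.log 4 (n (k+1) * n (k+2))) with hP
    have hP0 : 0 < P := by positivity
    have : (n (k+1) : ℝ) / P ≤ Real.sqrt (256 * delta n (k+1)) := by
      apply Real.le_sqrt_of_sq_le
      rw [div_pow, div_le_iff₀ (by positivity)]
      have : (n (k+1):ℝ)^2 ≤ ((n (k+1) : ℝ) / (n (k+2) : ℝ)) * (P^2*4) := by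
        rw [div_mul_eq_mul_div, le_div_iff₀ a2]
        nlinarith
      have hP2 : 0 < P^2 := by positivity
      rw [hd]
      nlinarith [mul_pos q1 hP2, mul_pos q2 hP2]
    rw [Real.sqrt_mul (by norm_num)] at this
    have h16 : Real.sqrt 256 = 16 := by
      rw [show (256:ℝ) = 16^2 by norm_num]; exact Real.sqrt_sq (by norm_num)
    rwa [h16] at this
  · have h := Nat.pow_log_le_self 4 (x := n k * n (k+1)) (Nat.mul_pos (hpos k hk) (hpos (k+1) (by omega))).ne'
    have h' : (4:ℝ) ^ (Nat.log 4 (n k * n (k+1))) ≤ n k * n (k+1) := by exact_mod_cast h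
    rw [h4] at h'
    set P : ℝ := 2 ^ (Nat.log 4 (n k * n (k+1))) with hP
    have hP0 : 0 < P := by positivity
    rw [mul_div_assoc]
    gcongr
    apply Real.le_sqrt_of_sq_le
    rw [div_pow, div_le_iff₀ (by positivity)]
    have : P^2 ≤ ((n k : ℝ) / (n (k+1) : ℝ)) * (n (k+1):ℝ)^2 := by
      rw [div_mul_eq_mul_div, le_div_iff₀ a1]
      nlinarith
    rw [hd]
    have hP2 : 0 < (n (k+1):ℝ)^2 := by positivity
    nlinarith [mul_pos q1 hP2, mul_pos q2 hP2]

lemma omega2_nonneg (g : ℝ → ℝ) (d : ℝ) : 0 ≤ omega2 g d :=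
  Real.iSup_nonneg (fun _ => Real.sqrt_nonneg _)

lemma summable_parts (f : ℝ → ℝ) (n : ℕ → ℕ) (T : ℕ → ℝ) (hT : ∀ k, 1 ≤ k → 0 < T k)
    (hT1 : ∀ᶠ k in atTop, 1 ≤ T k)
    (hsum : Summable (fun k => T k * delta n k ^ ((1 : ℝ) / 4)
      + Real.sqrt (omega2 (trunc f (T k)) (8 * Real.sqrt (delta n k))))) :
    Summable (fun k => Real.sqrt (delta n k)) ∧
    Summable (fun k => (omega2 (trunc f (T k)) (8 * Real.sqrt (delta n k)))^2) := by
  have hlim := hsum.tendsto_atTop_zero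
  have hlt := hlim.eventually (gt_mem_nhds zero_lt_one)
  have hd4 : ∀ k, 0 ≤ delta n k ^ ((1:ℝ)/4) := fun k => Real.rpow_nonneg (delta_nonneg n k) _
  constructor
  · apply Summable.of_norm_bounded_eventually_nat hsum
    filter_upwards [hlt, hT1] with k h1 h2
    rw [Real.norm_eq_abs, abs_of_nonneg (Real.sqrt_nonneg _)]
    have hs := Real.sqrt_nonneg (omega2 (trunc f (T k)) (8 * Real.sqrt (delta n k)))
    have hx := hd4 k
    have h3 : Real.sqrt (delta n k) = (delta n k ^ ((1:ℝ)/4))^2 := by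
      rw [Real.sqrt_eq_rpow, ← Real.rpow_natCast, ← Real.rpow_mul (delta_nonneg n k)]
      norm_num
    have h4 : delta n k ^ ((1:ℝ)/4) ≤ T k * delta n k ^ ((1:ℝ)/4) := le_mul_of_one_le_left hx h2
    refine le_trans (b := delta n k ^ ((1:ℝ)/4)) ?_ (by linarith)
    rw [h3]
    nlinarith
  · apply Summable.of_norm_bounded_eventually_nat hsum
    filter_upwards [hlt, hT1] with k h1 h2
    rw [Real.norm_eq_abs, abs_of_nonneg (sq_nonneg _)]
    set w := omega2 (trunc f (T k)) (8 * Real.sqrt (delta n k)) with hw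
    have hw0 : 0 ≤ w := omega2_nonneg _ _
    have hs := Real.sqrt_nonneg w
    have hsq := Real.sq_sqrt hw0
    have hx := hd4 k
    have h4 : 0 ≤ T k * delta n k ^ ((1:ℝ)/4) := by positivity
    have h5 : Real.sqrt w ≤ 1 := by linarith
    have : w^2 ≤ Real.sqrt w := by
      have : w ≤ Real.sqrt w := by nlinarith
      nlinarith
    linarith

lemma sum_tail (e : ℕ → ℝ) (he : Summable e) (h0 : ∀ k, 0 ≤ e k) (ε : ℝ) (hε : 0 < ε) :
    ∃ K, 1 ≤ K ∧ ∀ j, ∑ i ∈ Finset.range j, e (K+i+1) ≤ ε := by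
  have h := (tendsto_sum_nat_add e).eventually (gt_mem_nhds hε)
  obtain ⟨K, hK, hK1⟩ := (((tendsto_add_atTop_nat 1).eventually h).and (eventually_ge_atTop 1)).exists
  refine ⟨K, hK1, fun j => ?_⟩
  refine le_trans ?_ hK.le
  have hs : Summable (fun i => e (i + (K+1))) := (summable_nat_add_iff (K+1)).2 he
  have := hs.sum_le_tsum (Finset.range j) (fun i _ => h0 _)
  refine le_trans (le_of_eq ?_) this
  apply Finset.sum_congr rfl
  intro i _; congr 1; ring

/-- The main two-sided estimate. -/
lemma key_bound (f : ℝ → ℝ) (hf : Measurable f) (hper : ∀ x, f (x + 1) = f x)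
    (htail : nu.real {x | f x ≤ 1} < 1)
    (n : ℕ → ℕ) (hpos : ∀ k, 1 ≤ k → 0 < n k) (hmono : ∀ k, 1 ≤ k → n k < n (k + 1))
    (T : ℕ → ℝ) (hT : ∀ k, 1 ≤ k → 0 < T k)
    (hTtail : ∀ k, 1 ≤ k → nu.real {x | T k ≤ |f x|} ≤ ((k : ℝ) ^ 2)⁻¹)
    (hsum : Summable (fun k => T k * delta n k ^ ((1 : ℝ) / 4)
      + Real.sqrt (omega2 (trunc f (T k)) (8 * Real.sqrt (delta n k)))))
    (ε : ℝ) (hε : 0 < ε) :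
    ∃ K, ∀ u j, 
      nu.real {t | f t ≤ u - 2} ^ j - ε
        ≤ nu.real {t : ℝ | ∀ k, K < k → k ≤ K + j → f ((n k:ℝ) * t) ≤ u} ∧
      nu.real {t : ℝ | ∀ k, K < k → k ≤ K + j → f ((n k:ℝ) * t) ≤ u} ≤
      nu.real {t | f t ≤ u + 2} ^ j + ε := by
  have hsq : Summable (fun k : ℕ => ((k:ℝ)^2)⁻¹) := Real.summable_nat_pow_inv.2 (by norm_num)
  have hT1 : ∀ᶠ k in atTop, 1 ≤ T k := by
    have h1 := hsq.tendsto_atTop_zero.eventually (gt_mem_nhds (sub_pos.2 htail))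
    filter_upwards [h1, eventually_ge_atTop 1] with k h2 h3
    by_contra hcon
    push Not at hcon
    have h4 := hTtail k h3
    have h5 : {x | f x ≤ 1}ᶜ ⊆ {x | T k ≤ |f x|} := by
      intro x hx
      simp only [Set.mem_compl_iff, Set.mem_ofPred_eq, not_le] at hx ⊢
      exact (hcon.trans hx).le.trans (le_abs_self _)
    have h6 := measureReal_mono (μ := nu) h5
    rw [probReal_compl_eq_one_sub (measurableSet_le hf measurable_const)] at h6
    linarith
  obtain ⟨s1, s2⟩ := summable_parts f n T hT hT1 hsum
  let B : ℕ → ℝ := fun k => 2 * ((k:ℝ)^2)⁻¹ + (omega2 (trunc f (T k)) (8 * Real.sqrt (delta n k)))^2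
  have hB0 : ∀ k, 0 ≤ B k := fun k => by positivity
  let p : ℕ → ℕ := fun k => Nat.log 4 (n k * n (k+1))
  have hgrid : ∀ k, 1 ≤ k → ∃ φ : ℤ → ℝ,
      nu.real {t | 1 < |f ((n (k+1):ℝ) * t) - φ ⌊(2:ℝ)^(p (k+1)) * t⌋|} ≤ 2 * B (k+1) := by
    intro k hk
    apply grid_choice f hf hper (B (k+1)) (hB0 _) (n (k+1)) (p (k+1)) (hpos _ (by omega))
    intro w hw
    have hpb := (p_bounds n hpos k hk).1
    apply shift_bound f hf hper (B (k+1)) (8 * Real.sqrt (delta n (k+1)))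
    · intro h h0 hd
      exact omega_bound f hf hper (T (k+1)) (hT _ (by omega)) _ (hTtail _ (by omega)) _ h h0 hd
    · have : |w| ≤ 16 * Real.sqrt (delta n (k+1)) := hw.trans hpb
      linarith
  have hgrid' : ∀ k, ∃ φ : ℤ → ℝ, 1 < k →
      nu.real {t | 1 < |f ((n k:ℝ) * t) - φ ⌊(2:ℝ)^(p k) * t⌋|} ≤ 2 * B k := by
    intro k
    by_cases hk : 1 < k
    · obtain ⟨m, rfl⟩ : ∃ m, k = m + 1 := ⟨k-1, by omega⟩
      obtain ⟨φ, h⟩ := hgrid m (by omega)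
      exact ⟨φ, fun _ => h⟩
    · exact ⟨fun _ => 0, fun h => absurd h hk⟩
  choose φ hφ using hgrid'
  let e : ℕ → ℝ := fun k => 2 * (2 * B k) + 2 * Real.sqrt (delta n k)
  have he : Summable e :=
    ((((hsq.mul_left 2).add s2).mul_left 2).mul_left 2).add (s1.mul_left 2)
  have he0 : ∀ k, 0 ≤ e k := by
    intro k
    have := hB0 k
    positivity
  obtain ⟨K, hK1, hK⟩ := sum_tail e he he0 ε hε
  refine ⟨K, fun u j => ?_⟩
  have hm := max_bound f hf hper n p K (fun k hk => hpos _ (by omega))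
    (fun k hk => ?_) φ (fun k => 2 * B k) (fun k => 2 * Real.sqrt (delta n k))
    (fun k hk => hφ (k+1) (by omega)) (fun k hk => (p_bounds n hpos k (by omega)).2) u j
  · have h1 := hK j
    simp only [e] at h1
    exact ⟨by linarith [hm.1], by linarith [hm.2]⟩
  · apply Nat.log_mono_right
    have h1 := hmono k (by omega)
    have h2 := hmono (k+1) (by omega)
    exact Nat.mul_le_mul h1.le h2.le

/-- **Corollary (Fréchet limit for maxima).** If the distribution function `F` of the
1-periodic measurable `f` satisfies `F(x) < 1` for all `x` and `1 − F` is regularly varying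
at `+∞` with exponent `−α` (i.e. `x ↦ (1 − F(x)) xᵅ` is slowly varying), and `(n_k)`
satisfies the gap/modulus condition, then `(M_n − a_n)/b_n` converges in distribution
(w.r.t. Lebesgue measure on `(0,1)`) to the Fréchet law `G(x) = exp(−x^{−α})` for `x > 0`,
`G(x) = 0` for `x ≤ 0`; since `G` is continuous, convergence in distribution is expressed as
pointwise convergence of the distribution functions. -/
theorem stmt_3 (α : ℝ) (hα : 0 < α)
    (f : ℝ → ℝ) (hf : Measurable f) (hper : ∀ x, f (x + 1) = f x)
    (F : ℝ → ℝ) (hF : ∀ x, F x = (volume {t ∈ Set.Ioo (0 : ℝ) 1 | f t ≤ x}).toReal)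
    (hFlt : ∀ x, F x < 1)
    (hreg : SlowlyVarying (fun x => (1 - F x) * x ^ α))
    (n : ℕ → ℕ) (hpos : ∀ k, 1 ≤ k → 0 < n k) (hmono : ∀ k, 1 ≤ k → n k < n (k + 1))
    (T : ℕ → ℝ) (hT : ∀ k, 1 ≤ k → 0 < T k)
    (hTtail : ∀ k, 1 ≤ k →
      volume {x ∈ Set.Ioo (0 : ℝ) 1 | T k ≤ |f x|} ≤ ENNReal.ofReal (((k : ℝ) ^ 2)⁻¹))
    (hsum : Summable (fun k => T k * delta n k ^ ((1 : ℝ) / 4)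
      + Real.sqrt (omega2 (trunc f (T k)) (8 * Real.sqrt (delta n k))))) :
    ∃ (a b : ℕ → ℝ), (∀ N, 0 < b N) ∧
      ∀ x : ℝ,
        Tendsto (fun N =>
            (volume {t ∈ Set.Ioo (0 : ℝ) 1 | (Mmax f n N t - a N) / b N ≤ x}).toReal)
          atTop
          (nhds (if 0 < x then Real.exp (-(x ^ (-α))) else 0)) := by
  classical
  let G : ℝ → ℝ := fun v => nu.real {t | f t ≤ v}
  have hset : ∀ Q : ℝ → Prop, MeasurableSet {t | Q t} →
      (volume {t ∈ Set.Ioo (0 : ℝ) 1 | Q t}) = nu {t | Q t} := by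
    intro Q hQ
    rw [Measure.restrict_apply hQ]
    congr 1
    ext t; simp [and_comm]
  have hEm : ∀ v, MeasurableSet {t | f t ≤ v} := fun v => measurableSet_le hf measurable_const
  have hFG : ∀ v, F v = G v := by
    intro v
    rw [hF v, hset _ (hEm v)]; rfl
  have hG0 : ∀ v, 0 ≤ G v := fun v => measureReal_nonneg
  have hG1 : ∀ v, G v ≤ 1 := fun v => measureReal_le_one
  have hGmono : Monotone G := by
    intro v w hvw
    refine measureReal_mono (fun t ht => ?_)
    exact le_trans ht hvw
  have hGlim : Tendsto G atTop (nhds 1) := by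
    have : IsProbabilityMeasure (nu.map f) := Measure.isProbabilityMeasure_map hf.aemeasurable
    have h := tendsto_cdf_atTop (nu.map f)
    refine h.congr (fun v => ?_)
    rw [cdf_eq_real, map_measureReal_apply hf measurableSet_Iic]
    rfl
  obtain ⟨b, hb1, hbt, hbH⟩ := tail_norm α hα (fun v => 1 - G v)
    (fun v w h => by have := hGmono h; simp only; linarith)
    (fun v => by have := hFlt v; rw [hFG] at this; linarith)
    (by simpa using hGlim.const_sub 1)
    (by simpa only [hFG] using hreg)
  have hkey := key_bound f hf hper (by have := hFlt 1; rw [hFG] at this; exact this) n hpos hmono T hT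
    (fun k hk => by
      have h1 := hTtail k hk
      rw [hset _ (measurableSet_le measurable_const (by fun_prop))] at h1
      exact ENNReal.toReal_le_of_le_ofReal (by positivity) h1) hsum
  let L : ℝ → ℝ := fun y => Real.exp (-(y ^ (-α)))
  have hpow : ∀ y, 0 < y → Tendsto (fun N : ℕ => G (b N * y) ^ N) atTop (nhds (L y)) := by
    intro y hy
    have h1 := Real.tendsto_one_add_pow_exp_of_tendsto (g := fun N => -(1 - G (b N * y))) (t := -(y ^ (-α)))
      ((hbH y hy).neg.congr (fun N => by ring))
    refine h1.congr (fun N => ?_)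
    congr 1; ring
  have hGb : ∀ y, 0 < y → Tendsto (fun N : ℕ => G (b N * y)) atTop (nhds 1) :=
    fun y hy => hGlim.comp (hbt.atTop_mul_const hy)
  let P : ℕ → ℝ → ℝ := fun N v => nu.real {t | ∀ k, 1 ≤ k → k ≤ N → f ((n k : ℝ) * t) ≤ v}
  have hPm : ∀ N v, MeasurableSet {t | ∀ k, 1 ≤ k → k ≤ N → f ((n k : ℝ) * t) ≤ v} := by
    intro N v
    have : {t | ∀ k, 1 ≤ k → k ≤ N → f ((n k : ℝ) * t) ≤ v}
        = ⋂ k, ⋂ (_ : 1 ≤ k), ⋂ (_ : k ≤ N), {t | f ((n k : ℝ) * t) ≤ v} := by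
      ext t; simp
    rw [this]
    exact MeasurableSet.iInter fun k => MeasurableSet.iInter fun _ => MeasurableSet.iInter fun _ =>
      measurableSet_le (by fun_prop) measurable_const
  have hPeq : ∀ N, 1 ≤ N → ∀ x : ℝ,
      (volume {t ∈ Set.Ioo (0 : ℝ) 1 | (Mmax f n N t - 0) / b N ≤ x}).toReal = P N (b N * x) := by
    intro N hN x
    have hbp : 0 < b N := lt_of_lt_of_le one_pos (hb1 N)
    have h1 : ∀ t, (Mmax f n N t - 0) / b N ≤ x ↔ ∀ k, 1 ≤ k → k ≤ N → f ((n k : ℝ) * t) ≤ b N * x := by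
      intro t
      have hne : (Finset.Icc 1 N).Nonempty := ⟨1, by simp [hN]⟩
      rw [sub_zero, div_le_iff₀ hbp, mul_comm x, Mmax, dif_pos hne, Finset.sup'_le_iff]
      simp only [Finset.mem_Icc, and_imp]
    simp only [h1]
    rw [hset _ (hPm N _)]
    rfl
  have hupper : ∀ x y, 0 < y → x < y → ∀ ε, 0 < ε → ∀ᶠ N in atTop, P N (b N * x) ≤ L y + ε := by
    intro x y hy hxy ε hε
    obtain ⟨K, hK⟩ := hkey (ε/2) (by positivity)
    have h1 : Tendsto (fun N : ℕ => G (b N * y) ^ N / G (b N * y) ^ K) atTop (nhds (L y / 1 ^ K)) :=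
      (hpow y hy).div ((hGb y hy).pow K) (by simp)
    rw [one_pow, div_one] at h1
    have h2 := h1.eventually (gt_mem_nhds (show L y < L y + ε/2 by linarith))
    have h3 := (hGb y hy).eventually (lt_mem_nhds one_pos)
    have h4 := (hbt.atTop_mul_const (sub_pos.2 hxy)).eventually_ge_atTop 2
    filter_upwards [h2, h3, h4, eventually_ge_atTop K] with N g2 g3 g4 g5
    obtain ⟨j, rfl⟩ := Nat.exists_eq_add_of_le g5
    have g6 := (hK (b (K+j) * x) j).2
    have g7 : G (b (K+j) * y) ^ (K+j) / G (b (K+j) * y) ^ K = G (b (K+j) * y) ^ j := by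
      rw [pow_add]; field_simp
    rw [g7] at g2
    have g8 : G (b (K+j) * x + 2) ^ j ≤ G (b (K+j) * y) ^ j := by
      apply pow_le_pow_left₀ (hG0 _)
      apply hGmono; linarith
    have g9 : P (K+j) (b (K+j) * x) ≤ nu.real {t : ℝ | ∀ k, K < k → k ≤ K + j → f ((n k:ℝ) * t) ≤ b (K+j) * x} := by
      refine measureReal_mono (fun t ht k h1 h2 => ?_)
      exact ht k (by omega) h2
    change nu.real _ ≤ G (b (K+j) * x + 2) ^ j + ε/2 at g6
    linarith
  have hlower : ∀ x y, 0 < y → y < x → ∀ ε, 0 < ε → ∀ᶠ N in atTop, L y - ε ≤ P N (b N * x) := by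
    intro x y hy hxy ε hε
    obtain ⟨K, hK⟩ := hkey (ε/3) (by positivity)
    have h2 := (hpow y hy).eventually (lt_mem_nhds (show L y - ε/3 < L y by linarith))
    have hx : 0 < x := hy.trans hxy
    have h3' : Tendsto (fun N : ℕ => (K:ℝ) * (1 - G (b N * x))) atTop (nhds (K * (1 - 1))) :=
      ((hGb x hx).const_sub 1).const_mul _
    have h3 := h3'.eventually (gt_mem_nhds (show (K:ℝ) * (1 - 1) < ε/3 by simp; positivity))
    have h4 := (hbt.atTop_mul_const (sub_pos.2 hxy)).eventually_ge_atTop 2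
    filter_upwards [h2, h3, h4, eventually_ge_atTop K] with N g2 g3 g4 g5
    obtain ⟨j, rfl⟩ := Nat.exists_eq_add_of_le g5
    set u := b (K+j) * x with hu
    have g6 := (hK u j).1
    change G (u - 2) ^ j - ε/3 ≤ _ at g6
    have g8 : G (b (K+j) * y) ^ j ≤ G (u - 2) ^ j := by
      apply pow_le_pow_left₀ (hG0 _)
      apply hGmono; linarith
    have g9 : G (b (K+j) * y) ^ (K+j) ≤ G (b (K+j) * y) ^ j :=
      pow_le_pow_of_le_one (hG0 _) (hG1 _) (by omega)
    have g10 : {t : ℝ | ∀ k, K < k → k ≤ K + j → f ((n k:ℝ) * t) ≤ u} ⊆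
        {t | ∀ k, 1 ≤ k → k ≤ K+j → f ((n k : ℝ) * t) ≤ u} ∪
          ⋃ k ∈ Finset.Icc 1 K, {t | (n k : ℝ) * t ∈ {t | f t ≤ u}ᶜ} := by
      intro t ht
      by_cases hh : ∀ k, 1 ≤ k → k ≤ K → f ((n k : ℝ) * t) ≤ u
      · left
        intro k h1 h2
        rcases Nat.lt_or_ge K k with h | h
        · exact ht k h h2
        · exact hh k h1 h
      · right
        push Not at hh
        obtain ⟨k, h1, h2, h3⟩ := hh
        simp only [Set.mem_iUnion]
        refine ⟨k, Finset.mem_Icc.2 ⟨h1, h2⟩, ?_⟩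
        simpa using h3
    have g11 := (measureReal_mono (μ := nu) g10).trans (measureReal_union_le _ _)
    have g12 : nu.real (⋃ k ∈ Finset.Icc 1 K, {t | (n k : ℝ) * t ∈ {t | f t ≤ u}ᶜ}) ≤ K * (1 - G u) := by
      refine (measureReal_biUnion_finset_le _ _).trans ?_
      have : ∀ k ∈ Finset.Icc 1 K, nu.real {t | (n k : ℝ) * t ∈ {t | f t ≤ u}ᶜ} = 1 - G u := by
        intro k hk
        rw [nu_dil _ (hEm u).compl (by intro x; simp [hper]) (n k) (hpos k (Finset.mem_Icc.1 hk).1),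
          probReal_compl_eq_one_sub (hEm u)]
      rw [Finset.sum_congr rfl this]
      rw [Finset.sum_const, Nat.card_Icc, nsmul_eq_mul]
      simp only [Nat.add_sub_cancel, le_refl]
    change _ ≤ P (K+j) u + _ at g11
    linarith
  refine ⟨fun _ => 0, b, fun N => lt_of_lt_of_le one_pos (hb1 N), fun x => ?_⟩
  have hcongr : ∀ᶠ N in atTop, P N (b N * x) =
      (volume {t ∈ Set.Ioo (0 : ℝ) 1 | (Mmax f n N t - 0) / b N ≤ x}).toReal := by
    filter_upwards [eventually_ge_atTop 1] with N hN
    exact (hPeq N hN x).symm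
  refine Tendsto.congr' hcongr ?_
  rw [tendsto_order]
  split_ifs with hx
  · have hcont : ContinuousAt L x := by
      have : ContinuousAt (fun y : ℝ => y ^ (-α)) x := Real.continuousAt_rpow_const _ _ (Or.inl hx.ne')
      exact Real.continuous_exp.continuousAt.comp this.neg
    constructor
    · intro a ha
      have h1 : ∀ᶠ y in nhdsWithin x (Set.Iio x), a < L y :=
        (hcont.tendsto.mono_left nhdsWithin_le_nhds).eventually (lt_mem_nhds ha)
      have h2 : ∀ᶠ y in nhdsWithin x (Set.Iio x), y ∈ Set.Ioo 0 x := Ioo_mem_nhdsLT hx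
      obtain ⟨y, hy1, hy0, hyx⟩ := (h1.and h2).exists
      filter_upwards [hlower x y hy0 hyx ((L y - a)/2) (by linarith)] with N hN
      linarith
    · intro a ha
      have h1 : ∀ᶠ y in nhdsWithin x (Set.Ioi x), L y < a :=
        (hcont.tendsto.mono_left nhdsWithin_le_nhds).eventually (gt_mem_nhds ha)
      have h2 : ∀ᶠ y in nhdsWithin x (Set.Ioi x), x < y := eventually_mem_nhdsWithin
      obtain ⟨y, hy1, hyx⟩ := (h1.and h2).exists
      filter_upwards [hupper x y (hx.trans hyx) hyx ((a - L y)/2) (by linarith)] with N hN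
      linarith
  · constructor
    · intro a ha
      filter_upwards with N
      exact ha.trans_le measureReal_nonneg
    · intro a ha
      have hL0 : Tendsto L (nhdsWithin 0 (Set.Ioi 0)) (nhds 0) :=
        Real.tendsto_exp_atBot.comp (tendsto_neg_atTop_atBot.comp
          (tendsto_rpow_neg_nhdsGT_zero (neg_neg_of_pos hα)))
      have h2 : ∀ᶠ y : ℝ in nhdsWithin 0 (Set.Ioi 0), 0 < y := eventually_mem_nhdsWithin
      obtain ⟨y, hy1, hy0⟩ := ((hL0.eventually (gt_mem_nhds ha)).and h2).exists
      filter_upwards [hupper x y hy0 (by linarith) ((a - L y)/2) (by linarith)] with N hN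
      linarith
end

section
/- Let (Ω, F, P) be an atomless probability space, let X be a discrete (countably valued) random variable on it, and let G be a Borel probability measure on ℝ² whose first marginal equals the law of X. Then there exists a random variable Y on (Ω, F, P) such that the joint distribution of the pair (X, Y) equals G. -/
open MeasureTheory

/-- A measure is atomless if every set of positive measure contains a (measurable) subset of
strictly smaller positive measure. -/
def Atomless {Ω : Type*} [MeasurableSpace Ω] (μ : Measure Ω) : Prop :=
  ∀ s : Set Ω, MeasurableSet s → 0 < μ s →
    ∃ t, t ⊆ s ∧ MeasurableSet t ∧ 0 < μ t ∧ μ t < μ s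

open Filter Topology Set ProbabilityTheory

section chain
variable {Ω : Type*} [MeasurableSpace Ω]

def chRel (μ : Measure Ω) (A B : {s : Set Ω // MeasurableSet s}) : Prop :=
  A.1 ⊆ B.1 ∧ μ A.1 < μ B.1

def chC (μ : Measure Ω) : Set {s : Set Ω // MeasurableSet s} := maxChain (chRel μ)

lemma chC_mem (μ : Measure Ω) (A : {s : Set Ω // MeasurableSet s})
    (h : ∀ B ∈ chC μ, A ≠ B → chRel μ A B ∨ chRel μ B A) : A ∈ chC μ := by
  have hm : IsMaxChain (chRel μ) (chC μ) := maxChain_spec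
  have := hm.2 (hm.1.insert h) (Set.subset_insert _ _)
  rw [this]; exact Set.mem_insert _ _

lemma chC_lt (μ : Measure Ω) {A B : {s : Set Ω // MeasurableSet s}}
    (hA : A ∈ chC μ) (hB : B ∈ chC μ) (h : μ A.1 < μ B.1) : chRel μ A B := by
  have hm : IsMaxChain (chRel μ) (chC μ) := maxChain_spec
  rcases hm.1 hA hB (by rintro rfl; exact lt_irrefl _ h) with h1 | h1
  · exact h1
  · exact absurd h1.2 h.not_gt

lemma chC_eq (μ : Measure Ω) {A B : {s : Set Ω // MeasurableSet s}}
    (hA : A ∈ chC μ) (hB : B ∈ chC μ) (h : μ A.1 = μ B.1) : A = B := by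
  have hm : IsMaxChain (chRel μ) (chC μ) := maxChain_spec
  by_contra hne
  rcases hm.1 hA hB hne with h1 | h1
  · exact h1.2.ne h
  · exact h1.2.ne h.symm

lemma chC_le (μ : Measure Ω) {A B : {s : Set Ω // MeasurableSet s}}
    (hA : A ∈ chC μ) (hB : B ∈ chC μ) (h : μ A.1 ≤ μ B.1) : A.1 ⊆ B.1 := by
  rcases h.lt_or_eq with h | h
  · exact (chC_lt μ hA hB h).1
  · rw [chC_eq μ hA hB h]

lemma chC_lower (μ : Measure Ω) (c : ENNReal) :
    ∃ L ∈ chC μ, μ L.1 ≤ c ∧ ∀ A ∈ chC μ, μ A.1 ≤ c → μ A.1 ≤ μ L.1 := by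
  classical
  set S : Set ENNReal := {x | ∃ A ∈ chC μ, μ A.1 = x ∧ x ≤ c} with hS
  have hne : S.Nonempty := by
    by_cases h : ∃ B ∈ chC μ, μ B.1 = 0
    · obtain ⟨B, hB, h0⟩ := h
      exact ⟨0, B, hB, h0, zero_le⟩
    · push Not at h
      refine ⟨0, ⟨∅, MeasurableSet.empty⟩, chC_mem μ _ ?_, by simp, zero_le⟩
      intro B hB _
      left
      exact ⟨by simp, by simpa using pos_iff_ne_zero.2 (h B hB)⟩
  by_cases hatt : sSup S ∈ S
  · obtain ⟨A, hA, hAs, hc⟩ := hatt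
    refine ⟨A, hA, hAs ▸ hc, fun B hB hBc => ?_⟩
    rw [hAs]; exact le_sSup ⟨B, hB, rfl, hBc⟩
  obtain ⟨u, humono, hulim, huS⟩ := exists_seq_tendsto_sSup hne (OrderTop.bddAbove S)
  choose A hA hAu huc using huS
  have hmono : Monotone (fun n => (A n).1) := fun m n hmn =>
    chC_le μ (hA m) (hA n) (by rw [hAu, hAu]; exact humono hmn)
  have hμL : μ (⋃ n, (A n).1) = sSup S := by
    refine tendsto_nhds_unique (tendsto_measure_iUnion_atTop hmono) ?_
    refine hulim.congr fun n => ?_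
    simp [hAu]
  have hsc : sSup S ≤ c := sSup_le fun x hx => hx.choose_spec.2.2
  refine ⟨⟨⋃ n, (A n).1, MeasurableSet.iUnion fun n => (A n).2⟩, chC_mem μ _ ?_, ?_, ?_⟩
  · intro B hB _
    by_cases hBc : μ B.1 ≤ c
    · right
      have hBS : μ B.1 ∈ S := ⟨B, hB, rfl, hBc⟩
      have hlt : μ B.1 < sSup S := lt_of_le_of_ne (le_sSup hBS) (fun h => hatt (h ▸ hBS))
      obtain ⟨n, hn⟩ := (hulim.eventually (lt_mem_nhds hlt)).exists
      refine ⟨(chC_lt μ hB (hA n) (by rw [hAu]; exact hn)).1.trans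
        (Set.subset_iUnion (fun n => (A n).1) n), by rw [hμL]; exact hlt⟩
    · left
      push Not at hBc
      refine ⟨Set.iUnion_subset fun n => (chC_lt μ (hA n) hB ?_).1, ?_⟩
      · rw [hAu]; exact (huc n).trans_lt hBc
      · rw [hμL]; exact hsc.trans_lt hBc
  · rw [hμL]; exact hsc
  · intro B hB hBc
    rw [hμL]; exact le_sSup ⟨B, hB, rfl, hBc⟩

lemma chC_upper (μ : Measure Ω) [IsProbabilityMeasure μ] (c : ENNReal) (hc1 : c ≤ 1) :
    ∃ L ∈ chC μ, c ≤ μ L.1 ∧ ∀ A ∈ chC μ, c ≤ μ A.1 → μ L.1 ≤ μ A.1 := by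
  classical
  set S : Set ENNReal := {x | ∃ A ∈ chC μ, μ A.1 = x ∧ c ≤ x} with hS
  have hne : S.Nonempty := by
    by_cases h : ∃ B ∈ chC μ, μ B.1 = 1
    · obtain ⟨B, hB, h0⟩ := h
      exact ⟨1, B, hB, h0, hc1⟩
    · push Not at h
      refine ⟨1, ⟨univ, MeasurableSet.univ⟩, chC_mem μ _ ?_, by simp, hc1⟩
      intro B hB _
      right
      exact ⟨by simp, by simpa using lt_of_le_of_ne prob_le_one (h B hB)⟩
  by_cases hatt : sInf S ∈ S
  · obtain ⟨A, hA, hAs, hc⟩ := hatt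
    refine ⟨A, hA, hAs ▸ hc, fun B hB hBc => ?_⟩
    rw [hAs]; exact sInf_le ⟨B, hB, rfl, hBc⟩
  obtain ⟨u, humono, hulim, huS⟩ := exists_seq_tendsto_sInf hne (OrderBot.bddBelow S)
  choose A hA hAu huc using huS
  have hmono : Antitone (fun n => (A n).1) := fun m n hmn =>
    chC_le μ (hA n) (hA m) (by rw [hAu, hAu]; exact humono hmn)
  have hμL : μ (⋂ n, (A n).1) = sInf S := by
    refine tendsto_nhds_unique (tendsto_measure_iInter_atTop
      (fun n => (A n).2.nullMeasurableSet) hmono ⟨0, measure_ne_top _ _⟩) ?_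
    refine hulim.congr fun n => ?_
    simp [hAu]
  have hsc : c ≤ sInf S := le_sInf fun x hx => hx.choose_spec.2.2
  refine ⟨⟨⋂ n, (A n).1, MeasurableSet.iInter fun n => (A n).2⟩, chC_mem μ _ ?_, ?_, ?_⟩
  · intro B hB _
    by_cases hBc : c ≤ μ B.1
    · left
      have hBS : μ B.1 ∈ S := ⟨B, hB, rfl, hBc⟩
      have hlt : sInf S < μ B.1 := lt_of_le_of_ne (sInf_le hBS) (fun h => hatt (h ▸ hBS))
      obtain ⟨n, hn⟩ := (hulim.eventually (gt_mem_nhds hlt)).exists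
      refine ⟨(Set.iInter_subset (fun n => (A n).1) n).trans
        (chC_lt μ (hA n) hB (by rw [hAu]; exact hn)).1, by rw [hμL]; exact hlt⟩
    · right
      push Not at hBc
      refine ⟨Set.subset_iInter fun n => (chC_lt μ hB (hA n) ?_).1, ?_⟩
      · rw [hAu]; exact hBc.trans_le (huc n)
      · rw [hμL]; exact hBc.trans_le hsc
  · rw [hμL]; exact hsc
  · intro B hB hBc
    rw [hμL]; exact sInf_le ⟨B, hB, rfl, hBc⟩

lemma chC_exists (μ : Measure Ω) [IsProbabilityMeasure μ] (hμ : Atomless μ)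
    (c : ENNReal) (hc1 : c ≤ 1) : ∃ A ∈ chC μ, μ A.1 = c := by
  obtain ⟨L, hL, hLc, hLmax⟩ := chC_lower μ c
  obtain ⟨R, hR, hRc, hRmin⟩ := chC_upper μ c hc1
  by_contra hno
  push Not at hno
  have hL' : μ L.1 < c := lt_of_le_of_ne hLc (hno L hL)
  have hR' : c < μ R.1 := lt_of_le_of_ne hRc (hno R hR).symm
  have hLR := (chC_lt μ hL hR (hL'.trans hR')).1
  have hadd : μ L.1 + μ (R.1 \ L.1) = μ R.1 := by
    rw [← measure_inter_add_sdiff R.1 L.2, inter_eq_right.2 hLR]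
  have hpos : 0 < μ (R.1 \ L.1) := by
    rw [pos_iff_ne_zero]; intro h0
    rw [h0, add_zero] at hadd
    exact (hL'.trans hR').ne hadd
  obtain ⟨t, hts, htm, ht0, htlt⟩ := hμ _ (R.2.diff L.2) hpos
  have hdisj : Disjoint L.1 t := Set.disjoint_left.2 fun x hx hxt => (hts hxt).2 hx
  have hD : μ (L.1 ∪ t) = μ L.1 + μ t := measure_union hdisj htm
  have h1 : μ L.1 < μ (L.1 ∪ t) := by
    rw [hD]; exact ENNReal.lt_add_right (measure_ne_top _ _) ht0.ne'
  have h2 : μ (L.1 ∪ t) < μ R.1 := by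
    rw [hD, ← hadd]; exact ENNReal.add_lt_add_left (measure_ne_top _ _) htlt
  have hDR : L.1 ∪ t ⊆ R.1 := Set.union_subset hLR fun x hx => (hts hx).1
  have hmem : (⟨L.1 ∪ t, L.2.union htm⟩ : {s : Set Ω // MeasurableSet s}) ∈ chC μ := by
    refine chC_mem μ _ fun B hB _ => ?_
    rcases le_total (μ B.1) c with h | h
    · right
      have := hLmax B hB h
      exact ⟨(chC_le μ hB hL this).trans Set.subset_union_left, this.trans_lt h1⟩
    · left
      have := hRmin B hB h
      exact ⟨hDR.trans (chC_le μ hR hB this), h2.trans_le this⟩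
  rcases le_total (μ (L.1 ∪ t)) c with h | h
  · exact absurd (hLmax _ hmem h) h1.not_ge
  · exact absurd (hRmin _ hmem h) h2.not_ge

lemma exists_uniform (μ : Measure Ω) [IsProbabilityMeasure μ] (hμ : Atomless μ) :
    ∃ U : Ω → unitInterval, Measurable U ∧ Measure.map U μ = volume := by
  classical
  have hex : ∀ t : unitInterval, ∃ A ∈ chC μ, μ A.1 = ENNReal.ofReal t.1 := fun t =>
    chC_exists μ hμ _ (by simpa using t.2.2)
  choose A hA hAμ using hex
  have hmono : ∀ s t : unitInterval, s ≤ t → (A s).1 ⊆ (A t).1 := fun s t hst =>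
    chC_le μ (hA s) (hA t) (by rw [hAμ, hAμ]; exact ENNReal.ofReal_le_ofReal hst)
  let d := TopologicalSpace.denseSeq unitInterval
  let U : Ω → unitInterval := fun ω => ⨅ n, if ω ∈ (A (d n)).1 then d n else 1
  have hU : Measurable U := by
    refine Measurable.iInf fun n => ?_
    exact Measurable.ite (A (d n)).2 measurable_const measurable_const
  have hpre : ∀ x, U ⁻¹' Iio x = ⋃ n, ⋃ (_ : d n < x), (A (d n)).1 := by
    intro x
    ext ω
    simp only [mem_preimage, mem_Iio, U, iInf_lt_iff, mem_iUnion, exists_prop]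
    constructor
    · rintro ⟨n, hn⟩
      split_ifs at hn with h
      · exact ⟨n, hn, h⟩
      · exact absurd x.2.2 (not_le.2 hn)
    · rintro ⟨n, hn, h⟩
      exact ⟨n, by rw [if_pos h]; exact hn⟩
  have hm : ∀ x, μ (U ⁻¹' Iio x) = ENNReal.ofReal x.1 := by
    intro x
    apply le_antisymm
    · rw [← hAμ x, hpre]
      refine measure_mono ?_
      exact iUnion₂_subset fun n hn => hmono _ _ hn.le
    · refine le_of_forall_lt fun c hc => ?_
      have hctop : c ≠ ⊤ := (hc.trans ENNReal.ofReal_lt_top).ne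
      have hcx : c.toReal < x.1 := (ENNReal.lt_ofReal_iff_toReal_lt hctop).1 hc
      have hopen : IsOpen {y : unitInterval | c.toReal < y.1 ∧ y < x} :=
        (isOpen_lt continuous_const continuous_subtype_val).inter isOpen_Iio
      have hne : {y : unitInterval | c.toReal < y.1 ∧ y < x}.Nonempty := by
        obtain ⟨z, hz1, hz2⟩ := exists_between hcx
        exact ⟨⟨z, (ENNReal.toReal_nonneg.trans hz1.le), hz2.le.trans x.2.2⟩, hz1, hz2⟩
      obtain ⟨y, ⟨hy1, hy2⟩, n, rfl⟩ :=
        (TopologicalSpace.denseRange_denseSeq unitInterval).inter_open_nonempty _ hopen hne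
      calc c < ENNReal.ofReal (d n).1 := (ENNReal.lt_ofReal_iff_toReal_lt hctop).2 hy1
        _ = μ (A (d n)).1 := (hAμ _).symm
        _ ≤ _ := by
          rw [hpre]
          exact measure_mono (subset_iUnion₂ (s := fun n (_ : d n < x) => (A (d n)).1) n hy2)
  refine ⟨U, hU, ?_⟩
  have : IsProbabilityMeasure (Measure.map U μ) := Measure.isProbabilityMeasure_map hU.aemeasurable
  refine Measure.ext_of_Ici _ _ fun x => ?_
  rw [← compl_Iio, prob_compl_eq_one_sub measurableSet_Iio, prob_compl_eq_one_sub measurableSet_Iio,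
    Measure.map_apply hU measurableSet_Iio, hm]
  simp

lemma exists_law (μ : Measure Ω) [IsProbabilityMeasure μ] (hμ : Atomless μ)
    (ν : Measure ℝ) [IsProbabilityMeasure ν] :
    ∃ Y : Ω → ℝ, Measurable Y ∧ Measure.map Y μ = ν := by
  obtain ⟨U, hU, hUm⟩ := exists_uniform μ hμ
  obtain ⟨f, hf, hfm⟩ := Measure.exists_measurable_map_eq ν
  refine ⟨f ∘ U, hf.comp hU, ?_⟩
  rw [← Measure.map_map hf hU, hUm, hfm]

lemma atomless_cond (P : Measure Ω) [IsProbabilityMeasure P] (hP : Atomless P)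
    (s : Set Ω) (hs : MeasurableSet s) (hs0 : P s ≠ 0) : Atomless P[|s] := by
  intro t ht h0
  rw [cond_apply hs] at h0
  obtain ⟨t', h1, h2, h3, h4⟩ := hP (s ∩ t) (hs.inter ht) (by
    rw [pos_iff_ne_zero]; intro h; simp [h] at h0)
  refine ⟨t', h1.trans inter_subset_right, h2, ?_⟩
  rw [cond_apply hs, cond_apply hs, inter_eq_right.2 (h1.trans inter_subset_left)]
  have hi0 : (P s)⁻¹ ≠ 0 := ENNReal.inv_ne_zero.2 (measure_ne_top _ _)
  have hit : (P s)⁻¹ ≠ ⊤ := ENNReal.inv_ne_top.2 hs0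
  exact ⟨ENNReal.mul_pos hi0 h3.ne', ENNReal.mul_lt_mul_right hi0 hit h4⟩

end chain

/-- **Lemma.** Let `(Ω, F, P)` be an atomless probability space, `X` a discrete (countably
valued) random variable on it and `G` a Borel probability measure on `ℝ²` whose first
marginal is the law of `X`. Then there exists a random variable `Y` on `(Ω, F, P)` such that
the joint distribution of `(X, Y)` is `G`. -/
theorem stmt_13 {Ω : Type*} [MeasurableSpace Ω] (P : Measure Ω) [IsProbabilityMeasure P]
    (hP : Atomless P)
    (X : Ω → ℝ) (hX : Measurable X) (hXc : (Set.range X).Countable)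
    (G : Measure (ℝ × ℝ)) [IsProbabilityMeasure G]
    (hmarg : Measure.map Prod.fst G = Measure.map X P) :
    ∃ Y : Ω → ℝ, Measurable Y ∧ Measure.map (fun ω => (X ω, Y ω)) P = G := by
  have hm : ∀ s, MeasurableSet s → G (Prod.fst ⁻¹' s) = P (X ⁻¹' s) := fun s hs => by
    rw [← Measure.map_apply measurable_fst hs, hmarg, Measure.map_apply hX hs]
  have hfib : ∀ x : ℝ, ∃ Y : Ω → ℝ, Measurable Y ∧ ∀ T, MeasurableSet T →
      P (X ⁻¹' {x} ∩ Y ⁻¹' T) = G (Prod.fst ⁻¹' {x} ∩ Prod.snd ⁻¹' T) := by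
    intro x
    have hsx : MeasurableSet (X ⁻¹' {x}) := hX (measurableSet_singleton x)
    have hgx : MeasurableSet (Prod.fst ⁻¹' {x} : Set (ℝ × ℝ)) :=
      measurable_fst (measurableSet_singleton x)
    have hmx := hm {x} (measurableSet_singleton x)
    by_cases h0 : P (X ⁻¹' {x}) = 0
    · refine ⟨fun _ => 0, measurable_const, fun T hT => ?_⟩
      rw [measure_mono_null inter_subset_left h0,
        measure_mono_null inter_subset_left (hmx.trans h0)]
    have : IsProbabilityMeasure P[|X ⁻¹' {x}] := cond_isProbabilityMeasure h0
    have hG0 : G (Prod.fst ⁻¹' {x}) ≠ 0 := by rw [hmx]; exact h0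
    have : IsProbabilityMeasure G[|Prod.fst ⁻¹' {x}] := cond_isProbabilityMeasure hG0
    have : IsProbabilityMeasure (Measure.map Prod.snd G[|Prod.fst ⁻¹' {x}]) :=
      Measure.isProbabilityMeasure_map measurable_snd.aemeasurable
    obtain ⟨Y, hY, hYm⟩ := exists_law P[|X ⁻¹' {x}] (atomless_cond P hP _ hsx h0)
      (Measure.map Prod.snd G[|Prod.fst ⁻¹' {x}])
    refine ⟨Y, hY, fun T hT => ?_⟩
    have h1 := congrArg (fun m => m T) hYm
    simp only [Measure.map_apply hY hT, Measure.map_apply measurable_snd hT] at h1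
    rw [cond_apply hsx, cond_apply hgx, hmx] at h1
    exact (ENNReal.mul_right_inj (ENNReal.inv_ne_zero.2 (measure_ne_top _ _))
      (ENNReal.inv_ne_top.2 h0)).1 h1
  choose Y hY hYm using hfib
  have hYmeas : Measurable fun ω => Y (X ω) ω := by
    intro T hT
    have : (fun ω => Y (X ω) ω) ⁻¹' T = ⋃ x ∈ range X, X ⁻¹' {x} ∩ Y x ⁻¹' T := by
      ext ω
      simp only [mem_preimage, mem_iUnion, mem_inter_iff, mem_singleton_iff, exists_prop]
      constructor
      · intro h; exact ⟨X ω, mem_range_self ω, rfl, h⟩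
      · rintro ⟨x, _, rfl, h⟩; exact h
    rw [this]
    exact MeasurableSet.biUnion hXc fun x _ =>
      (hX (measurableSet_singleton x)).inter (hY x hT)
  refine ⟨_, hYmeas, ?_⟩
  ext S hS
  rw [Measure.map_apply (hX.prodMk hYmeas) hS]
  have hR : MeasurableSet (range X) := hXc.measurableSet
  have hsec : ∀ x : ℝ, MeasurableSet (Prod.mk x ⁻¹' S) := fun x => measurable_prodMk_left hS
  have hd : (range X).PairwiseDisjoint fun x => X ⁻¹' {x} ∩ Y x ⁻¹' (Prod.mk x ⁻¹' S) := by
    intro a _ b _ hab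
    refine Set.disjoint_left.2 ?_
    rintro ω ⟨h1, _⟩ ⟨h2, _⟩
    exact hab (h1.symm.trans h2)
  have hd' : (range X).PairwiseDisjoint fun x =>
      (Prod.fst ⁻¹' {x} ∩ Prod.snd ⁻¹' (Prod.mk x ⁻¹' S) : Set (ℝ × ℝ)) := by
    intro a _ b _ hab
    refine Set.disjoint_left.2 ?_
    rintro ω ⟨h1, _⟩ ⟨h2, _⟩
    exact hab (h1.symm.trans h2)
  have e1 : (fun ω => (X ω, Y (X ω) ω)) ⁻¹' S =
      ⋃ x ∈ range X, X ⁻¹' {x} ∩ Y x ⁻¹' (Prod.mk x ⁻¹' S) := by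
      ext ω
      simp only [mem_preimage, mem_iUnion, mem_inter_iff, mem_singleton_iff, exists_prop]
      constructor
      · intro h; exact ⟨X ω, mem_range_self ω, rfl, h⟩
      · rintro ⟨x, _, rfl, h⟩; exact h
  have e2 : S ∩ Prod.fst ⁻¹' (range X) =
      ⋃ x ∈ range X, (Prod.fst ⁻¹' {x} ∩ Prod.snd ⁻¹' (Prod.mk x ⁻¹' S) : Set (ℝ × ℝ)) := by
    ext ⟨a, b⟩
    simp only [mem_inter_iff, mem_preimage, mem_iUnion, mem_singleton_iff, exists_prop]
    constructor
    · rintro ⟨h1, h2⟩; exact ⟨a, h2, rfl, h1⟩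
    · rintro ⟨x, h2, rfl, h1⟩; exact ⟨h1, h2⟩
  have hnull : G (Prod.fst ⁻¹' (range X)ᶜ) = 0 := by
    rw [hm _ hR.compl]
    have : X ⁻¹' (range X)ᶜ = ∅ := by ext ω; simp
    simp [this]
  have hGS : G S = G (S ∩ Prod.fst ⁻¹' (range X)) := by
    have h0 : G (S \ Prod.fst ⁻¹' (range X)) = 0 :=
      measure_mono_null (t := Prod.fst ⁻¹' (range X)ᶜ) (fun z hz => hz.2) hnull
    have h1 := measure_inter_add_sdiff (μ := G) S (measurable_fst hR)
    rw [h0, add_zero] at h1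
    exact h1.symm
  rw [hGS, e1, e2, measure_biUnion hXc hd fun x _ =>
      (hX (measurableSet_singleton x)).inter (hY x (hsec x)),
    measure_biUnion hXc hd' fun x _ =>
      (measurable_fst (measurableSet_singleton x)).inter (measurable_snd (hsec x))]
  exact tsum_congr fun x => hYm x _ (hsec x)
end

section
/- Let (n_k)_{k≥1} be a strictly increasing sequence of positive integers with n_{k+1}/n_k → ∞. For integers d ≥ 1, N ≥ 1 and ν ∈ ℤ, let L(N, d, ν) = #{ (a, b, k, l) : 1 ≤ a, b ≤ d, 1 ≤ k, l ≤ N, a n_k − b n_l = ν }, where in the case a = b and ν = 0 the trivial solutions k = l are excluded. Then for every fixed d ≥ 1, sup_{ν ∈ ℤ} L(N, d, ν) = o(N) as N → ∞. -/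
open Filter

/-- The Diophantine counting function
`L(N, d, ν) = #{(a,b,k,l) : 1 ≤ a,b ≤ d, 1 ≤ k,l ≤ N, a n_k − b n_l = ν}`,
where for `a = b`, `ν = 0` the trivial solutions `k = l` are excluded. -/
def Lcount (n : ℕ → ℕ) (N d : ℕ) (ν : ℤ) : ℕ :=
  (((Finset.Icc 1 d ×ˢ Finset.Icc 1 d) ×ˢ (Finset.Icc 1 N ×ˢ Finset.Icc 1 N)).filter
    (fun q => (q.1.1 : ℤ) * (n q.2.1 : ℤ) - (q.1.2 : ℤ) * (n q.2.2 : ℤ) = ν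
      ∧ ¬(q.1.1 = q.1.2 ∧ ν = 0 ∧ q.2.1 = q.2.2))).card

theorem aux_mono (n : ℕ → ℕ) (hmono : ∀ k, 1 ≤ k → n k < n (k + 1)) :
    ∀ j k, 1 ≤ j → j < k → n j < n k := by
  intro j k hj hjk
  induction k, hjk using Nat.le_induction with
  | base => exact hmono j hj
  | succ m hm ih => exact ih.trans (hmono m (by omega))

theorem aux_contra (n : ℕ → ℕ) (hmono : ∀ k, 1 ≤ k → n k < n (k + 1)) (d K : ℕ)
    (hK : ∀ k, K ≤ k → 2 * d * n k < n (k + 1)) (a b k l k' l' : ℕ)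
    (ha : 1 ≤ a) (had : a ≤ d) (hbd : b ≤ d) (hk : 1 ≤ k) (hl' : 1 ≤ l')
    (hkK : K + 1 ≤ k) (hkk : k < k') (hlk' : l' < k')
    (h : (a : ℤ) * n k - b * n l = a * n k' - b * n l') : False := by
  obtain ⟨m, rfl⟩ : ∃ m, k' = m + 1 := ⟨k' - 1, by omega⟩
  have le : ∀ j, 1 ≤ j → j ≤ m → n j ≤ n m := by
    intro j hj hjm
    rcases hjm.lt_or_eq with h1 | h1
    · exact (aux_mono n hmono j m hj h1).le
    · rw [h1]
  have h1 := hK m (by omega)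
  have h2 : a * n k ≤ d * n m := Nat.mul_le_mul had (le k hk (by omega))
  have h3 : b * n l' ≤ d * n m := Nat.mul_le_mul hbd (le l' hl' (by omega))
  have h4 : 1 * n (m + 1) ≤ a * n (m + 1) := Nat.mul_le_mul_right _ ha
  have h5 : a * n (m + 1) + b * n l = a * n k + b * n l' := by
    zify; linarith
  have h6 : 2 * d * n m = d * n m + d * n m := by ring
  omega

theorem aux_bound (n : ℕ → ℕ) (hmono : ∀ k, 1 ≤ k → n k < n (k + 1)) (d K : ℕ)
    (hK : ∀ k, K ≤ k → 2 * d * n k < n (k + 1)) (N : ℕ) (ν : ℤ) :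
    Lcount n N d ν ≤ d * d * (3 * (K + 2)) := by
  have inj : ∀ j k, 1 ≤ j → 1 ≤ k → n j = n k → j = k := by
    intro j k hj hk h
    rcases lt_trichotomy j k with h1 | h1 | h1
    · have := aux_mono n hmono j k hj h1; omega
    · exact h1
    · have := aux_mono n hmono k j hk h1; omega
  have hc : ((Finset.Icc 1 d ×ˢ Finset.Icc 1 d) ×ˢ
      (Finset.range 3 ×ˢ Finset.range (K + 2))).card = d * d * (3 * (K + 2)) := by
    simp [Finset.card_product]
  rw [← hc, Lcount]
  apply Finset.card_le_card_of_injOn (fun q => (q.1,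
    ((if q.2.1 = q.2.2 then 0 else if q.2.2 < q.2.1 then 1 else 2),
      min (max q.2.1 q.2.2) (K + 1))))
  · rintro ⟨⟨a, b⟩, k, l⟩ hq
    simp only [Finset.coe_filter, Finset.mem_product, Set.mem_setOf_eq] at hq
    simp only [Finset.coe_product, Set.mem_prod, Finset.mem_coe, Finset.mem_range]
    refine ⟨hq.1.1, ?_, by omega⟩
    split_ifs <;> omega
  · rintro ⟨⟨a, b⟩, k, l⟩ hq ⟨⟨a', b'⟩, k', l'⟩ hq' he
    simp only [Finset.coe_filter, Finset.mem_product, Set.mem_setOf_eq, Finset.mem_Icc] at hq hq'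
    simp only [Prod.mk.injEq] at he
    obtain ⟨⟨rfl, rfl⟩, hs, hm⟩ := he
    obtain ⟨⟨⟨⟨ha, had⟩, hb, hbd⟩, ⟨hk, -⟩, hl, -⟩, hν, hne⟩ := hq
    obtain ⟨⟨-, ⟨hk', -⟩, hl', -⟩, hν', hne'⟩ := hq'
    have heq : (a : ℤ) * n k - b * n l = a * n k' - b * n l' := hν.trans hν'.symm
    have heq2 : (b : ℤ) * n l - a * n k = b * n l' - a * n k' := by linarith
    have ha0 : (a : ℤ) ≠ 0 := by omega
    have hb0 : (b : ℤ) ≠ 0 := by omega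
    have hkl : k = k' → l = l' := by
      rintro rfl
      apply inj l l' hl hl'
      have : (b : ℤ) * n l = b * n l' := by linarith
      exact_mod_cast mul_left_cancel₀ hb0 this
    have hlk : l = l' → k = k' := by
      rintro rfl
      apply inj k k' hk hk'
      have : (a : ℤ) * n k = a * n k' := by linarith
      exact_mod_cast mul_left_cancel₀ ha0 this
    suffices k = k' ∧ l = l' by rw [this.1, this.2]
    rcases lt_trichotomy k l with h1 | h1 | h1
    · have h2 : k' < l' := by
        by_contra hcon
        split_ifs at hs <;> omega
      suffices l = l' from ⟨hlk this, this⟩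
      rcases lt_trichotomy l l' with h3 | h3 | h3
      · exact (aux_contra n hmono d K hK b a l k l' k' hb hbd had hl hk' (by omega) h3 h2
          heq2).elim
      · exact h3
      · exact (aux_contra n hmono d K hK b a l' k' l k hb hbd had hl' hk (by omega) h3 h1
          heq2.symm).elim
    · have h2 : k' = l' := by
        by_contra hcon
        split_ifs at hs
      subst h1 h2
      suffices k = k' from ⟨this, this⟩
      apply inj k k' hk hk'
      have h3 : ((a : ℤ) - b) * n k = (a - b) * n k' := by linarith
      have h4 : (a : ℤ) - b ≠ 0 := by
        intro h0
        have hab : a = b := by omega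
        subst hab
        exact hne ⟨rfl, by simpa using hν.symm, rfl⟩
      exact_mod_cast mul_left_cancel₀ h4 h3
    · have h2 : l' < k' := by
        by_contra hcon
        split_ifs at hs <;> omega
      suffices k = k' from ⟨this, hkl this⟩
      rcases lt_trichotomy k k' with h3 | h3 | h3
      · exact (aux_contra n hmono d K hK a b k l k' l' ha had hbd hk hl' (by omega) h3 h2
          heq).elim
      · exact h3
      · exact (aux_contra n hmono d K hK a b k' l' k l ha had hbd hk' hl (by omega) h3 h1
          heq.symm).elim

/-- **Proposition.** If `(n_k)` is strictly increasing with `n_{k+1}/n_k → ∞`, then for every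
fixed `d ≥ 1` one has `sup_{ν ∈ ℤ} L(N, d, ν) = o(N)` as `N → ∞`, uniformly in `ν`. -/
theorem stmt_17 (n : ℕ → ℕ) (hpos : ∀ k, 1 ≤ k → 0 < n k)
    (hmono : ∀ k, 1 ≤ k → n k < n (k + 1))
    (hgap : Tendsto (fun k => (n (k + 1) : ℝ) / (n k : ℝ)) atTop atTop)
    (d : ℕ) (hd : 1 ≤ d) :
    Tendsto (fun N => (⨆ ν : ℤ, (Lcount n N d ν : ℝ)) / (N : ℝ)) atTop (nhds 0) := by
  obtain ⟨K, hK⟩ : ∃ K, ∀ k, K ≤ k → 2 * d * n k < n (k + 1) := by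
    obtain ⟨K, hK⟩ := eventually_atTop.1 (hgap.eventually_gt_atTop (2 * d : ℝ))
    refine ⟨K + 1, fun k hk => ?_⟩
    have h1 := hK k (by omega)
    have h2 : (0 : ℝ) < n k := by exact_mod_cast hpos k (by omega)
    rw [lt_div_iff₀ h2] at h1
    exact_mod_cast h1
  have hB : ∀ N, (⨆ ν : ℤ, (Lcount n N d ν : ℝ)) ≤ ((d * d * (3 * (K + 2)) : ℕ) : ℝ) :=
    fun N => ciSup_le fun ν => by exact_mod_cast aux_bound n hmono d K hK N ν
  refine squeeze_zero (fun N => ?_) (fun N => ?_)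
    (tendsto_const_div_atTop_nhds_zero_nat ((d * d * (3 * (K + 2)) : ℕ) : ℝ))
  · exact div_nonneg (Real.iSup_nonneg fun ν => Nat.cast_nonneg _) (Nat.cast_nonneg _)
  · exact div_le_div_of_nonneg_right (hB N) (Nat.cast_nonneg _)
end
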